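/- Let Δ be a Fano simplex of dimension d ≥ 2 and Gorenstein index g ≥ 1 with (d,g) not among (3,1), (3,2), (4,1). Then mult(Δ) ≤ 3·t_{g,d−1}²/g. If equality holds, then either (d,g) = (3,3) and Δ ≅ Δ(P) where P is the 3×4 matrix with columns (1,0,0), (1,12,0), (5,0,12), (−7,−12,−12), or there exist positive integers a₁,…,a_{d−1} such that Δ ≅ Δ(P) where P is the d×(d+1) matrix whose first d−2 columns are the standard basis vectors e₁,…,e_{d−2}, whose (d−1)-st column v has entries v_k = ((s_{g,k}−g)/s_{g,k})·(t_{g,d−1}/g) for k = 1,…,d−2, v_{d−1} = t_{g,d−1}/g, v_d = 0, whose d-th column is (a₁,…,a_{d−1}, 3t_{g,d−1}), and whose last column w has entries w_k = −(((s_{g,k}+2g)/s_{g,k})·(t_{g,d−1}/g) + a_k) for k = 1,…,d−2, w_{d−1} = −(t_{g,d−1}/g + a_{d−1}), w_d = −3t_{g,d−1}. Moreover, if g is odd, then choosing a_k = ((s_{g,k}−g)/s_{g,k})·(t_{g,d−1}/g) for k = 1,…,d−2 and a_{d−1} = t_{g,d−1}/g yields a Fano simplex of dimension d and Gorenstein index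 g attaining the bound. -/

import Mathlib

open Finset Pointwise

/-- Cast an integer vector to a rational vector. -/
def toQ {d : ℕ} (v : Fin d → ℤ) : Fin d → ℚ := fun j => (v j : ℚ)

/-- An integer vector is primitive if the gcd of its entries is 1. -/
def IsPrimitive {d : ℕ} (v : Fin d → ℤ) : Prop := Finset.univ.gcd v = 1

/-- The origin lies in the interior of the simplex with the given vertices,
i.e. the origin is a convex combination of the vertices with positive coefficients. -/
def OriginInInterior {d : ℕ} (v : Fin (d + 1) → Fin d → ℚ) : Prop :=
  ∃ w : Fin (d + 1) → ℚ, (∀ i, 0 < w i) ∧ ∑ i, w i = 1 ∧ ∀ j, ∑ i, w i * v i j = 0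

/-- A Fano simplex, given by its tuple of vertices: the vertices are primitive integer
vectors, affinely independent, and the origin lies in the interior. -/
def IsFanoSimplex {d : ℕ} (v : Fin (d + 1) → Fin d → ℤ) : Prop :=
  AffineIndependent ℚ (fun i => toQ (v i)) ∧ (∀ i, IsPrimitive (v i)) ∧
    OriginInInterior fun i => toQ (v i)

/-- The simplex spanned by the given vertices. -/
def simplexHull {d : ℕ} (v : Fin (d + 1) → Fin d → ℚ) : Set (Fin d → ℚ) :=
  convexHull ℚ (Set.range v)

/-- The dual body `Δ* = {u : ⟨u,v⟩ ≥ -1 for all v ∈ Δ}`. -/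
def dualBody {d : ℕ} (S : Set (Fin d → ℚ)) : Set (Fin d → ℚ) :=
  {u | ∀ x ∈ S, -1 ≤ ∑ j, u j * x j}

/-- A set is a lattice polytope iff it is the convex hull of its integral points
(equivalently, all its vertices are lattice points). -/
def IsLatticeSet {d : ℕ} (S : Set (Fin d → ℚ)) : Prop :=
  S = convexHull ℚ {x ∈ S | ∀ j, ∃ z : ℤ, x j = (z : ℚ)}

/-- The Gorenstein index: the least positive integer `g` such that `g • Δ*` is a
lattice polytope. -/
noncomputable def gorensteinIndex {d : ℕ} (v : Fin (d + 1) → Fin d → ℚ) : ℕ :=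
  sInf {g : ℕ | 0 < g ∧ IsLatticeSet ((g : ℚ) • dualBody (simplexHull v))}

/-- The normalized volume `d! · vol(Δ)` of the simplex with the given vertices. -/
def normVol {d : ℕ} (v : Fin (d + 1) → Fin d → ℚ) : ℚ :=
  |(Matrix.of fun i j : Fin d => v i.succ j - v 0 j).det|

/-- Two (Fano) simplices, given by their vertex tuples, are isomorphic iff some
unimodular integer matrix maps the vertex set of one onto the vertex set of the other. -/
def IsIsomorphicTo {d : ℕ} (v w : Fin (d + 1) → Fin d → ℤ) : Prop :=
  ∃ (U : Matrix (Fin d) (Fin d) ℤ) (σ : Equiv.Perm (Fin (d + 1))),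
    IsUnit U.det ∧ ∀ i, U.mulVec (v i) = w (σ i)


/-- The multiplicity of a Fano simplex: the index in `ℤ^d` of the sublattice
generated by the vertices. -/
noncomputable def multOf {d : ℕ} (v : Fin (d + 1) → Fin d → ℤ) : ℕ :=
  (AddSubgroup.closure (Set.range v)).index

/-- Isomorphism onto a simplex given by a rational vertex matrix: a unimodular
integer matrix maps the vertex set of `v` onto the columns of `w`. -/
def IsIsomorphicToQ {d : ℕ} (v : Fin (d + 1) → Fin d → ℤ)
    (w : Fin (d + 1) → Fin d → ℚ) : Prop :=
  ∃ (U : Matrix (Fin d) (Fin d) ℤ) (σ : Equiv.Perm (Fin (d + 1))),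
    IsUnit U.det ∧ ∀ i, (U.map (Int.cast : ℤ → ℚ)).mulVec (toQ (v i)) = w (σ i)

/-- The `g`-Sylvester sequence: `s_{g,1} = g+1`, `s_{g,k+1} = s_{g,k}(s_{g,k}-1)+1`.
(The value at `0` is junk and never used.) -/
def sylv (g : ℕ) : ℕ → ℕ
  | 0 => 0
  | 1 => g + 1
  | k + 2 => sylv g (k + 1) * (sylv g (k + 1) - 1) + 1

/-- The truncated `g`-Sylvester sequence `t_{g,k} = s_{g,k} - 1`. -/
def tsylv (g k : ℕ) : ℕ := sylv g k - 1

/-- The exceptional 3×4 vertex matrix for `(d,g) = (3,3)` with columns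
(1,0,0), (1,12,0), (5,0,12), (-7,-12,-12), written for general `d`. -/
def Pexc33 (d : ℕ) : Fin (d + 1) → Fin d → ℚ := fun i j =>
  if i.val = 0 then (if j.val = 0 then 1 else 0)
  else if i.val = 1 then (if j.val = 0 then 1 else if j.val = 1 then 12 else 0)
  else if i.val = 2 then (if j.val = 0 then 5 else if j.val = 2 then 12 else 0)
  else (if j.val = 0 then -7 else -12)

/-- The general extremal `d×(d+1)` vertex matrix for the multiplicity bound:
the first `d-2` columns are `e_1,…,e_{d-2}`; the `(d-1)`-st column has entries
`((s_{g,k}-g)/s_{g,k})·(t_{g,d-1}/g)` for `k = 1,…,d-2`, then `t_{g,d-1}/g`, then `0`;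
the `d`-th column is `(a_1,…,a_{d-1}, 3 t_{g,d-1})`; the last column has entries
`-(((s_{g,k}+2g)/s_{g,k})·(t_{g,d-1}/g) + a_k)` for `k = 1,…,d-2`, then
`-(t_{g,d-1}/g + a_{d-1})`, then `-3 t_{g,d-1}`. -/
def PgenMult (g d : ℕ) (a : ℕ → ℚ) : Fin (d + 1) → Fin d → ℚ := fun i j =>
  if i.val < d - 2 then (if j.val = i.val then 1 else 0)
  else if i.val = d - 2 then
    (if j.val < d - 2 then
      ((sylv g (j.val + 1) : ℚ) - (g : ℚ)) / (sylv g (j.val + 1) : ℚ) *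
        ((tsylv g (d - 1) : ℚ) / (g : ℚ))
    else if j.val = d - 2 then (tsylv g (d - 1) : ℚ) / (g : ℚ)
    else 0)
  else if i.val = d - 1 then
    (if j.val < d - 1 then a (j.val + 1) else 3 * (tsylv g (d - 1) : ℚ))
  else
    (if j.val < d - 2 then
      -(((sylv g (j.val + 1) : ℚ) + 2 * (g : ℚ)) / (sylv g (j.val + 1) : ℚ) *
          ((tsylv g (d - 1) : ℚ) / (g : ℚ)) + a (j.val + 1))
    else if j.val = d - 2 then -((tsylv g (d - 1) : ℚ) / (g : ℚ) + a (d - 1))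
    else -(3 * (tsylv g (d - 1) : ℚ)))

/-- The special choice of `a_1,…,a_{d-1}` available for odd `g`:
`a_k = ((s_{g,k}-g)/s_{g,k})·(t_{g,d-1}/g)` for `k = 1,…,d-2` and
`a_{d-1} = t_{g,d-1}/g`. -/
def aSpec (g d : ℕ) : ℕ → ℚ := fun k =>
  if k ≤ d - 2 then
    ((sylv g k : ℚ) - (g : ℚ)) / (sylv g k : ℚ) * ((tsylv g (d - 1) : ℚ) / (g : ℚ))
  else (tsylv g (d - 1) : ℚ) / (g : ℚ)

/-!
For a Fano simplex with vertices `v i` let `m i` be `g` times the vertex of the dual simplex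
opposite to `v i`, so that `⟨m i, v k⟩ = -g` for `k ≠ i` and `⟨m i, v i⟩ = A i - g` with
`∑ 1 / A i = 1 / g`. The matrix of these pairings has rank `d`, and comparing one of its maximal
minors with the indices of the lattices spanned by the `v i` and by the `m i` gives
`mult v * mult m * lcm A ^ 2 = g * ∏ A i`. Since the `v i` are primitive, every prime power
dividing `g` divides `mult m`; hence `mult v` is at most the product of all `A i` but the two
largest.

That product is bounded by replacing the largest denominators, one at a time, by equal ones, until
what is left can be compared with the Sylvester expansion of `1 / g`, using Curtiss' theorem and
`1 + x ≤ exp x`. Equality forces the `A i` to be Sylvester numbers followed by three equal numbers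
or, for `(d, g) = (3, 3)`, all equal to `12`. In the first case Gauss elimination on the `m i`
produces the rows of the unimodular matrix sending `v` to the asserted form; in the second the
form of `v` is found modulo `12`.
-/

/-! ### Sylvester sequences -/

section Sylvester

variable {g : ℕ}

theorem tsylv_one (g : ℕ) : tsylv g 1 = g := by simp [tsylv, sylv]

theorem sylv_eq_tsylv_add_one (g k : ℕ) : sylv g (k + 1) = tsylv g (k + 1) + 1 := by
  cases k <;> simp [tsylv, sylv]

theorem sylv_pos (g k : ℕ) : 0 < sylv g (k + 1) := by
  rw [sylv_eq_tsylv_add_one]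
  exact Nat.succ_pos _

theorem tsylv_add_two (g k : ℕ) : tsylv g (k + 2) = tsylv g (k + 1) * sylv g (k + 1) := by
  simp [tsylv, sylv, mul_comm]

theorem tsylv_pos (hg : 0 < g) (k : ℕ) : 0 < tsylv g (k + 1) := by
  induction k with
  | zero => rwa [tsylv_one]
  | succ k ih => rw [tsylv_add_two]; exact Nat.mul_pos ih (sylv_pos g k)

theorem tsylv_eq_mul_prod (g n : ℕ) : tsylv g (n + 1) = g * ∏ k ∈ range n, sylv g (k + 1) := by
  induction n with
  | zero => simp [tsylv_one]
  | succ n ih => rw [tsylv_add_two, ih, prod_range_succ, mul_assoc]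

theorem sum_one_div_sylv (hg : 0 < g) (k : ℕ) :
    ∑ i ∈ range k, 1 / (sylv g (i + 1) : ℝ) = 1 / (g : ℝ) - 1 / (tsylv g (k + 1) : ℝ) := by
  induction k with
  | zero => simp [tsylv_one]
  | succ k ih =>
    have hT : (0 : ℝ) < tsylv g (k + 1) := by exact_mod_cast tsylv_pos hg k
    rw [sum_range_succ, ih, tsylv_add_two, sylv_eq_tsylv_add_one]
    push_cast
    field_simp
    ring

theorem eq_zero_and_eq_three_of_tsylv_eq_three (hg : 0 < g) {k : ℕ} (h : tsylv g (k + 1) = 3) :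
    k = 0 ∧ g = 3 := by
  cases k with
  | zero => exact ⟨rfl, by rwa [tsylv_one] at h⟩
  | succ k =>
    have hpos := tsylv_pos hg k
    rw [tsylv_add_two, sylv_eq_tsylv_add_one] at h
    rcases Nat.lt_or_ge (tsylv g (k + 1)) 2 with h1 | h2
    · rw [show tsylv g (k + 1) = 1 by omega] at h
      omega
    · nlinarith

end Sylvester

/-! ### Products of sequences with dominated partial sums -/

section PartialSums

variable {x y : ℕ → ℝ}

-- Summation by parts: the weights `1 / x i` increase, and the partial sums of `y - x` are `≥ 0`.
theorem sum_div_sub_one_le (hx : ∀ i, 0 < x i) (hanti : Antitone x) (k : ℕ)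
    (hD : ∀ j ≤ k, 0 ≤ ∑ i ∈ range j, (y i - x i)) :
    ∑ i ∈ range (k + 1), (y i / x i - 1) ≤ (∑ i ∈ range (k + 1), (y i - x i)) / x k := by
  have hterm (i : ℕ) : y i / x i - 1 = (y i - x i) / x i := by rw [sub_div, div_self (hx i).ne']
  induction k with
  | zero => simp [hterm]
  | succ k ih =>
    rw [sum_range_succ, sum_range_succ (fun i => y i - x i) (k + 1), add_div, hterm (k + 1)]
    gcongr
    calc ∑ i ∈ range (k + 1), (y i / x i - 1)
        ≤ (∑ i ∈ range (k + 1), (y i - x i)) / x k := ih fun j hj => hD j (by omega)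
      _ ≤ (∑ i ∈ range (k + 1), (y i - x i)) / x (k + 1) :=
          div_le_div_of_nonneg_left (hD _ le_rfl) (hx _) (hanti k.le_succ)

theorem prod_div_le_exp (hx : ∀ i, 0 < x i) (hy : ∀ i, 0 < y i) (hanti : Antitone x) (k : ℕ)
    (hD : ∀ j ≤ k, 0 ≤ ∑ i ∈ range j, (y i - x i)) :
    ∏ i ∈ range (k + 1), y i / x i ≤ Real.exp ((∑ i ∈ range (k + 1), (y i - x i)) / x k) := by
  refine le_trans ?_ (Real.exp_le_exp.2 (sum_div_sub_one_le hx hanti k hD))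
  rw [Real.exp_sum]
  refine prod_le_prod (fun i _ => (div_pos (hy i) (hx i)).le) fun i _ => ?_
  linarith [Real.add_one_le_exp (y i / x i - 1)]

theorem prod_div_lt_exp (hx : ∀ i, 0 < x i) (hy : ∀ i, 0 < y i) (hanti : Antitone x) (k : ℕ)
    (hD : ∀ j ≤ k, 0 ≤ ∑ i ∈ range j, (y i - x i)) (hne : ∃ i ≤ k, x i ≠ y i) :
    ∏ i ∈ range (k + 1), y i / x i < Real.exp ((∑ i ∈ range (k + 1), (y i - x i)) / x k) := by
  obtain ⟨i, hi, hne⟩ := hne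
  refine lt_of_lt_of_le ?_ (Real.exp_le_exp.2 (sum_div_sub_one_le hx hanti k hD))
  rw [Real.exp_sum]
  refine prod_lt_prod (fun i _ => div_pos (hy i) (hx i))
    (fun i _ => by linarith [Real.add_one_le_exp (y i / x i - 1)])
    ⟨i, mem_range.2 (by omega), ?_⟩
  have hratio : y i / x i - 1 ≠ 0 := by
    rw [sub_ne_zero, Ne, div_eq_one_iff_eq (hx i).ne']
    exact hne.symm
  linarith [Real.add_one_lt_exp hratio]

end PartialSums

/-! ### Unit fractions summing to `1 / g` -/

/-- The part of `1 / g` that remains after subtracting the first `k` unit fractions `1 / A i`. -/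
noncomputable def unitFractionRem (g : ℕ) (A : ℕ → ℕ) (k : ℕ) : ℝ :=
  1 / (g : ℝ) - ∑ i ∈ range k, 1 / (A i : ℝ)

section UnitFractions

variable {g N : ℕ} {A : ℕ → ℕ}

theorem unitFractionRem_zero (g : ℕ) (A : ℕ → ℕ) : unitFractionRem g A 0 = 1 / g := by
  simp [unitFractionRem]

theorem unitFractionRem_succ (g : ℕ) (A : ℕ → ℕ) (k : ℕ) :
    unitFractionRem g A (k + 1) = unitFractionRem g A k - 1 / (A k : ℝ) := by
  rw [unitFractionRem, unitFractionRem, sum_range_succ]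
  ring

theorem unitFractionRem_antitone (g : ℕ) (A : ℕ → ℕ) : Antitone (unitFractionRem g A) :=
  antitone_nat_of_succ_le fun k => by
    rw [unitFractionRem_succ]
    exact sub_le_self _ (by positivity)

theorem sum_one_div_sylv_sub (hg : 0 < g) (A : ℕ → ℕ) (k : ℕ) :
    ∑ i ∈ range k, (1 / (sylv g (i + 1) : ℝ) - 1 / (A i : ℝ)) =
      unitFractionRem g A k - 1 / tsylv g (k + 1) := by
  rw [sum_sub_distrib, sum_one_div_sylv hg, unitFractionRem]
  ring

-- The remainder is a positive fraction whose denominator divides `g * ∏ A i`.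
theorem one_div_mul_prod_le_unitFractionRem (hg : 0 < g) (hA : ∀ i, 0 < A i) {k : ℕ}
    (hr : 0 < unitFractionRem g A k) :
    1 / ((g : ℝ) * ∏ i ∈ range k, (A i : ℝ)) ≤ unitFractionRem g A k := by
  have hgR : (0 : ℝ) < g := by exact_mod_cast hg
  have hAR (i : ℕ) : (0 : ℝ) < A i := by exact_mod_cast hA i
  have hprod : (0 : ℝ) < g * ∏ i ∈ range k, (A i : ℝ) := mul_pos hgR (prod_pos fun i _ => hAR i)
  have hint : ∃ z : ℤ, unitFractionRem g A k * (g * ∏ i ∈ range k, (A i : ℝ)) = z := by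
    clear hr hprod
    induction k with
    | zero => exact ⟨1, by simp [unitFractionRem_zero, hgR.ne']⟩
    | succ k ih =>
      obtain ⟨z, hz⟩ := ih
      refine ⟨z * A k - g * ∏ i ∈ range k, (A i : ℤ), ?_⟩
      have := (hAR k).ne'
      rw [unitFractionRem_succ, prod_range_succ]
      push_cast
      rw [← hz]
      field_simp
  obtain ⟨z, hz⟩ := hint
  have hz_pos : (0 : ℝ) < z := hz ▸ mul_pos hr hprod
  rw [div_le_iff₀ hprod, hz]
  exact_mod_cast Int.add_one_le_iff.2 (by exact_mod_cast hz_pos : (0 : ℤ) < z)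

theorem prod_sylv_ratio (hg : 0 < g) (A : ℕ → ℕ) (k : ℕ) :
    ∏ i ∈ range k, 1 / (sylv g (i + 1) : ℝ) / (1 / (A i : ℝ)) =
      g * (∏ i ∈ range k, (A i : ℝ)) / tsylv g (k + 1) := by
  have hgR : (g : ℝ) ≠ 0 := by exact_mod_cast hg.ne'
  rw [tsylv_eq_mul_prod]
  push_cast
  rw [mul_div_mul_left _ _ hgR, ← prod_div_distrib]
  exact prod_congr rfl fun i _ => by rw [div_div_div_eq, one_mul, mul_one]

theorem antitone_one_div_natCast (hA : ∀ i, 0 < A i) (hmono : Monotone A) :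
    Antitone fun i => 1 / (A i : ℝ) := fun i j hij =>
  one_div_le_one_div_of_le (by exact_mod_cast hA i) (by exact_mod_cast hmono hij)

-- Curtiss' theorem. If the inequality first failed at `k + 1`, comparing partial sums would give
-- `g * ∏ A i ≤ tsylv g (k + 2)`, against the integrality of the remainder times `g * ∏ A i`.
theorem one_div_tsylv_le_unitFractionRem (hg : 0 < g) (hA : ∀ i, 0 < A i) (hmono : Monotone A)
    {k : ℕ} (hr : 0 < unitFractionRem g A k) :
    1 / (tsylv g (k + 1) : ℝ) ≤ unitFractionRem g A k := by
  induction k using Nat.strong_induction_on with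
  | _ k ih =>
    rcases k with _ | k
    · simp [unitFractionRem_zero, tsylv_one]
    by_contra! hlt
    have hx (i : ℕ) : 0 < 1 / (A i : ℝ) := one_div_pos.2 (by exact_mod_cast hA i)
    have hy (i : ℕ) : 0 < 1 / (sylv g (i + 1) : ℝ) := one_div_pos.2 (by exact_mod_cast sylv_pos g i)
    have hT : (0 : ℝ) < tsylv g (k + 1 + 1) := by exact_mod_cast tsylv_pos hg (k + 1)
    have hexp := prod_div_le_exp hx hy (antitone_one_div_natCast hA hmono) k fun j hj => by
      rw [sum_one_div_sylv_sub hg, sub_nonneg]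
      exact ih j (by omega) (hr.trans_le (unitFractionRem_antitone g A (by omega)))
    rw [sum_one_div_sylv_sub hg, prod_sylv_ratio hg] at hexp
    have hprod : (g : ℝ) * ∏ i ∈ range (k + 1), (A i : ℝ) ≤ tsylv g (k + 1 + 1) := by
      rw [← div_le_one hT]
      exact hexp.trans
        (Real.exp_le_one_iff.2 (div_nonpos_of_nonpos_of_nonneg (by linarith) (hx k).le))
    have hpos : (0 : ℝ) < g * ∏ i ∈ range (k + 1), (A i : ℝ) := by
      exact_mod_cast Nat.mul_pos hg (prod_pos fun i _ => hA i)
    exact hlt.not_ge ((one_div_le_one_div_of_le hpos hprod).trans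
      (one_div_mul_prod_le_unitFractionRem hg hA hr))

theorem unitFractionRem_eq_sum_Ico (hsum : ∑ i ∈ range N, 1 / (A i : ℝ) = 1 / g) {k : ℕ}
    (hk : k ≤ N) : unitFractionRem g A k = ∑ i ∈ Ico k N, 1 / (A i : ℝ) := by
  rw [sum_Ico_eq_sub _ hk, hsum, unitFractionRem]

theorem unitFractionRem_pos (hA : ∀ i, 0 < A i) (hsum : ∑ i ∈ range N, 1 / (A i : ℝ) = 1 / g)
    {k : ℕ} (hk : k < N) : 0 < unitFractionRem g A k := by
  rw [unitFractionRem_eq_sum_Ico hsum hk.le]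
  exact sum_pos (fun i _ => one_div_pos.2 (by exact_mod_cast hA i)) (nonempty_Ico.2 hk)

theorem unitFractionRem_mul_le (hA : ∀ i, 0 < A i) (hmono : Monotone A)
    (hsum : ∑ i ∈ range N, 1 / (A i : ℝ) = 1 / g) {k : ℕ} (hk : k ≤ N) :
    unitFractionRem g A k * A k ≤ (N - k : ℕ) := by
  have hAk : (0 : ℝ) < A k := by exact_mod_cast hA k
  rw [← le_div_iff₀ hAk, unitFractionRem_eq_sum_Ico hsum hk]
  refine (sum_le_card_nsmul _ _ _ fun i hi =>
    antitone_one_div_natCast hA hmono (mem_Ico.1 hi).1).trans_eq ?_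
  rw [Nat.card_Ico, nsmul_eq_mul, mul_one_div]

theorem eq_of_unitFractionRem_mul_eq (hA : ∀ i, 0 < A i) (hmono : Monotone A)
    (hsum : ∑ i ∈ range N, 1 / (A i : ℝ) = 1 / g) {k : ℕ} (hk : k ≤ N)
    (h : unitFractionRem g A k * A k = (N - k : ℕ)) {i : ℕ} (hki : k ≤ i) (hiN : i < N) :
    A i = A k := by
  have hAk : (0 : ℝ) < A k := by exact_mod_cast hA k
  have hle : ∀ j ∈ Ico k N, 1 / (A j : ℝ) ≤ 1 / A k := fun j hj =>
    antitone_one_div_natCast hA hmono (mem_Ico.1 hj).1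
  have hsum_eq : ∑ j ∈ Ico k N, 1 / (A j : ℝ) = ∑ _j ∈ Ico k N, 1 / (A k : ℝ) := by
    rw [← unitFractionRem_eq_sum_Ico hsum hk, sum_const, Nat.card_Ico, nsmul_eq_mul, mul_one_div,
      eq_div_iff hAk.ne', h]
  simpa using (sum_eq_sum_iff_of_le hle).1 hsum_eq i (mem_Ico.2 ⟨hki, hiN⟩)

end UnitFractions

/-! ### The optimisation -/

/-- The bound on a product of the `k + c` smallest of `k + c + 2` denominators in terms of the
first `k` of them, obtained by splitting the remainder equally among the last `c + 2`. -/
noncomputable def tailBound (g : ℕ) (A : ℕ → ℕ) (c k : ℕ) : ℝ :=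
  (∏ i ∈ range k, (A i : ℝ)) * ((c + 2) / unitFractionRem g A k) ^ c

/-- The value of `tailBound` when the first `k` denominators are Sylvester numbers. -/
noncomputable def sylvTailBound (g c k : ℕ) : ℝ :=
  tsylv g (k + 1) / g * ((c + 2) * tsylv g (k + 1)) ^ c

section Optimisation

variable {g : ℕ} {A : ℕ → ℕ}

theorem tailBound_zero (hg : 0 < g) (A : ℕ → ℕ) (c : ℕ) :
    tailBound g A c 0 = sylvTailBound g c 0 := by
  have hgR : (g : ℝ) ≠ 0 := by exact_mod_cast hg.ne'
  simp [tailBound, sylvTailBound, unitFractionRem_zero, tsylv_one, hgR]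

theorem tailBound_eq_ratio_mul (hg : 0 < g) (A : ℕ → ℕ) (c k : ℕ) :
    tailBound g A c k = (∏ i ∈ range k, 1 / (sylv g (i + 1) : ℝ) / (1 / (A i : ℝ))) *
      (1 / tsylv g (k + 1) / unitFractionRem g A k) ^ c * sylvTailBound g c k := by
  have : (0 : ℝ) < g := by exact_mod_cast hg
  have hT : (0 : ℝ) < tsylv g (k + 1) := by exact_mod_cast tsylv_pos hg k
  rw [prod_sylv_ratio hg, tailBound, sylvTailBound]
  simp only [div_pow, mul_pow, one_pow]
  field_simp

theorem exp_mul_pow_le_one {r s a : ℝ} {c : ℕ} (hs : 0 < s) (hsr : s ≤ r) (hra : r * a ≤ c) :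
    Real.exp ((r - s) / (1 / a)) * (s / r) ^ c ≤ 1 := by
  have hr : 0 < r := hs.trans_le hsr
  have hpow : (s / r) ^ c ≤ Real.exp (c * (s / r - 1)) := by
    rw [Real.exp_nat_mul]
    gcongr
    linarith [Real.add_one_le_exp (s / r - 1)]
  have hexponent : (r - s) / (1 / a) + c * (s / r - 1) ≤ 0 := by
    have : (r - s) / (1 / a) + c * (s / r - 1) = (r - s) * (a - c / r) := by
      rw [div_div_eq_mul_div, div_one]
      field_simp
      ring
    rw [this]
    exact mul_nonpos_of_nonneg_of_nonpos (sub_nonneg.2 hsr)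
      (sub_nonpos.2 ((le_div_iff₀ hr).2 (by linarith)))
  calc Real.exp ((r - s) / (1 / a)) * (s / r) ^ c
      ≤ Real.exp ((r - s) / (1 / a)) * Real.exp (c * (s / r - 1)) := by gcongr
    _ ≤ 1 := by rwa [← Real.exp_add, Real.exp_le_one_iff]

theorem sylvTailBound_pos (hg : 0 < g) (c k : ℕ) : 0 < sylvTailBound g c k := by
  have : (0 : ℝ) < g := by exact_mod_cast hg
  have hT : (0 : ℝ) < tsylv g (k + 1) := by exact_mod_cast tsylv_pos hg k
  unfold sylvTailBound
  positivity

-- If `A k` is at most the share `c / r` of the remainder `r`, then `1 / A` followed by `c` copies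
-- of `r / c` is still decreasing, so its product can be compared with that of the sequence of
-- Sylvester unit fractions.
theorem tailBound_le_sylvTailBound (hg : 0 < g) (hA : ∀ i, 0 < A i) (hmono : Monotone A)
    {c k : ℕ} (hr : 0 < unitFractionRem g A (k + 1)) (hc : unitFractionRem g A (k + 1) * A k ≤ c) :
    tailBound g A c (k + 1) ≤ sylvTailBound g c (k + 1) ∧
      (tailBound g A c (k + 1) = sylvTailBound g c (k + 1) → ∀ i ≤ k, A i = sylv g (i + 1)) := by
  have hx (i : ℕ) : 0 < 1 / (A i : ℝ) := one_div_pos.2 (by exact_mod_cast hA i)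
  have hy (i : ℕ) : 0 < 1 / (sylv g (i + 1) : ℝ) := one_div_pos.2 (by exact_mod_cast sylv_pos g i)
  have hT : 0 < 1 / (tsylv g (k + 1 + 1) : ℝ) :=
    one_div_pos.2 (by exact_mod_cast tsylv_pos hg (k + 1))
  have hcurtiss {j : ℕ} (hj : j ≤ k + 1) : 1 / (tsylv g (j + 1) : ℝ) ≤ unitFractionRem g A j :=
    one_div_tsylv_le_unitFractionRem hg hA hmono (hr.trans_le (unitFractionRem_antitone g A hj))
  have hD (j : ℕ) (hj : j ≤ k) : 0 ≤ ∑ i ∈ range j, (1 / (sylv g (i + 1) : ℝ) - 1 / (A i : ℝ)) := by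
    rw [sum_one_div_sylv_sub hg, sub_nonneg]
    exact hcurtiss (by omega)
  have hanti := antitone_one_div_natCast hA hmono
  have hone := exp_mul_pow_le_one hT (hcurtiss le_rfl) hc
  rw [tailBound_eq_ratio_mul hg]
  refine ⟨mul_le_of_le_one_left (sylvTailBound_pos hg _ _).le (le_trans ?_ hone), fun heq => ?_⟩
  · have := prod_div_le_exp hx hy hanti k hD
    rw [sum_one_div_sylv_sub hg] at this
    gcongr
  · by_contra! hne
    obtain ⟨i, hi, hne⟩ := hne
    have := prod_div_lt_exp hx hy hanti k hD
      ⟨i, hi, fun h => hne (by simpa using h)⟩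
    rw [sum_one_div_sylv_sub hg] at this
    refine (mul_lt_of_lt_one_left (sylvTailBound_pos hg _ _) (lt_of_lt_of_le ?_ hone)).ne heq
    gcongr

-- `x ^ (c + 1) / (x - 1) ^ c` is increasing for `x ≥ c + 1`, by Bernoulli's inequality.
theorem pow_mul_pow_succ_le_of_le (c : ℕ) {x y : ℝ} (hx : 1 < x) (hcx : c + 1 ≤ x) (hxy : x ≤ y) :
    (y - 1) ^ c * x ^ (c + 1) ≤ y ^ (c + 1) * (x - 1) ^ c := by
  have : 0 < x := by linarith
  have hy0 : 0 < y := by linarith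
  have hy1 : 0 < y - 1 := by linarith
  set q := y * (x - 1) / (x * (y - 1)) with hq
  have hq0 : 0 ≤ q := div_nonneg (mul_nonneg (by linarith) (by linarith)) (by positivity)
  have hbernoulli : 1 + c * (q - 1) ≤ q ^ c := by
    simpa using one_add_mul_le_pow (by linarith : -2 ≤ q - 1) c
  have hlinear : x ≤ y * (1 + c * (q - 1)) := by
    have hdiff : y * (1 + c * (q - 1)) - x = (y - x) * (y * (x - c) - x) / (x * (y - 1)) := by
      rw [hq]
      field_simp
      ring
    rw [← sub_nonneg, hdiff]
    exact div_nonneg (mul_nonneg (by linarith) (by nlinarith)) (by positivity)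
  calc (y - 1) ^ c * x ^ (c + 1) = (x * (y - 1)) ^ c * x := by rw [mul_pow]; ring
    _ ≤ (x * (y - 1)) ^ c * (y * q ^ c) := by
      gcongr
      exact hlinear.trans (by gcongr)
    _ = y ^ (c + 1) * (x - 1) ^ c := by
      rw [hq, div_pow, mul_pow y, mul_pow x]
      field_simp
      ring

theorem tailBound_succ_le_tailBound (hA : ∀ i, 0 < A i) {c k : ℕ} (hc : 0 < c)
    (hr : 0 < unitFractionRem g A k) (hlow : c ≤ unitFractionRem g A (k + 1) * A k)
    (hup : unitFractionRem g A k * A k ≤ c + 3) :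
    tailBound g A c (k + 1) ≤ tailBound g A (c + 1) k := by
  have hAk : (0 : ℝ) < A k := by exact_mod_cast hA k
  have hcR : (0 : ℝ) < c := by exact_mod_cast hc
  set r := unitFractionRem g A k
  set x := r * A k with hx
  have hx1 : unitFractionRem g A (k + 1) * A k = x - 1 := by
    rw [unitFractionRem_succ, sub_mul, one_div_mul_cancel hAk.ne']
  rw [hx1] at hlow
  have hxm1 : 0 < x - 1 := hcR.trans_le hlow
  have : 0 < x := by linarith
  have hpow := pow_mul_pow_succ_le_of_le c (by linarith) (by linarith) hup
  have hr1 : unitFractionRem g A (k + 1) = (x - 1) * r / x := by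
    rw [← hx1, hx]
    field_simp
  have hAk_eq : (A k : ℝ) = x / r := by rw [hx]; field_simp
  rw [tailBound, tailBound, prod_range_succ, hr1, hAk_eq]
  calc (∏ i ∈ range k, (A i : ℝ)) * (x / r) * ((c + 2) / ((x - 1) * r / x)) ^ c
      = (∏ i ∈ range k, (A i : ℝ)) / (r ^ (c + 1) * (x - 1) ^ c) *
          ((c + 3 - 1) ^ c * x ^ (c + 1)) := by
        rw [div_pow, div_pow, mul_pow, show (c : ℝ) + 3 - 1 = c + 2 by ring]
        field_simp
        ring
    _ ≤ (∏ i ∈ range k, (A i : ℝ)) / (r ^ (c + 1) * (x - 1) ^ c) *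
          ((c + 3) ^ (c + 1) * (x - 1) ^ c) := by gcongr
    _ = (∏ i ∈ range k, (A i : ℝ)) * (((c + 1 : ℕ) + 2) / r) ^ (c + 1) := by
        rw [div_pow]
        push_cast
        rw [show (c : ℝ) + 1 + 2 = c + 3 by ring]
        field_simp

theorem exists_prod_le_sylvTailBound (hg : 0 < g) (hA : ∀ i, 0 < A i) (hmono : Monotone A) {n : ℕ}
    (hsum : ∑ i ∈ range (n + 3), 1 / (A i : ℝ) = 1 / g) :
    ∃ c k, 0 < c ∧ k + c = n + 1 ∧ ∏ i ∈ range (n + 1), (A i : ℝ) ≤ sylvTailBound g c k ∧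
      (∏ i ∈ range (n + 1), (A i : ℝ) = sylvTailBound g c k → ∀ i < k, A i = sylv g (i + 1)) := by
  have hrem_pos {k : ℕ} (hk : k < n + 3) := unitFractionRem_pos hA hsum hk
  have hrem_mul {k : ℕ} (hk : k ≤ n + 3) := unitFractionRem_mul_le hA hmono hsum hk
  have hstart : ∏ i ∈ range (n + 1), (A i : ℝ) ≤ tailBound g A 1 n := by
    have := hrem_mul (k := n) (by omega)
    rw [Nat.add_sub_cancel_left, mul_comm, ← le_div_iff₀ (hrem_pos (by omega))] at this
    rw [prod_range_succ, tailBound, pow_one]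
    norm_num at this ⊢
    gcongr
  suffices hdescend : ∀ k c, 0 < c → k + c = n + 1 →
      ∏ i ∈ range (n + 1), (A i : ℝ) ≤ tailBound g A c k →
      ∃ c k, 0 < c ∧ k + c = n + 1 ∧ ∏ i ∈ range (n + 1), (A i : ℝ) ≤ sylvTailBound g c k ∧
        (∏ i ∈ range (n + 1), (A i : ℝ) = sylvTailBound g c k → ∀ i < k, A i = sylv g (i + 1)) from
    hdescend n 1 one_pos rfl hstart
  intro k
  induction k with
  | zero => exact fun c hc hkc hle => ⟨c, 0, hc, hkc, tailBound_zero hg A c ▸ hle, by simp⟩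
  | succ k ih =>
    intro c hc hkc hle
    rcases le_or_gt (unitFractionRem g A (k + 1) * A k) c with hsmall | hlarge
    · obtain ⟨hbound, heq⟩ :=
        tailBound_le_sylvTailBound hg hA hmono (hrem_pos (by omega)) hsmall
      exact ⟨c, k + 1, hc, hkc, hle.trans hbound, fun h i hi =>
        heq (hbound.antisymm (h ▸ hle)) i (Nat.lt_succ_iff.1 hi)⟩
    · have hup := hrem_mul (k := k) (by omega)
      rw [show n + 3 - k = c + 3 by omega] at hup
      exact ih (c + 1) c.succ_pos (by omega) (hle.trans
        (tailBound_succ_le_tailBound hA hc (hrem_pos (by omega)) hlarge.le (by exact_mod_cast hup)))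

theorem add_three_pow_lt {c : ℕ} (hc : 2 ≤ c) : (c + 3) ^ (c + 1) < 2 ^ (c + 1) * (c + 2) ^ c := by
  induction c, hc using Nat.le_induction with
  | base => norm_num
  | succ c _ ih =>
    have hstep : (c + 4) ^ (c + 2) * (c + 2) ^ c ≤ 2 * (c + 3) ^ (c + 1) * (c + 3) ^ (c + 1) :=
      calc (c + 4) ^ (c + 2) * (c + 2) ^ c
        _ = (c + 4) ^ 2 * ((c + 4) * (c + 2)) ^ c := by
          rw [mul_pow]
          ring
        _ ≤ (2 * (c + 3) ^ 2) * ((c + 3) ^ 2) ^ c := by gcongr <;> nlinarith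
        _ = 2 * (c + 3) ^ (c + 1) * (c + 3) ^ (c + 1) := by
          rw [← pow_mul]
          ring
    refine lt_of_mul_lt_mul_right ?_ ((c + 2) ^ c).zero_le
    calc (c + 4) ^ (c + 2) * (c + 2) ^ c ≤ 2 * (c + 3) ^ (c + 1) * (c + 3) ^ (c + 1) := hstep
      _ < 2 * (c + 3) ^ (c + 1) * (2 ^ (c + 1) * (c + 2) ^ c) := by gcongr
      _ = 2 ^ (c + 2) * (c + 3) ^ (c + 1) * (c + 2) ^ c := by ring

theorem sylvTailBound_lt_of_two_le (hg : 0 < g) {c : ℕ} (hc : 2 ≤ c) (k : ℕ) :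
    sylvTailBound g (c + 1) k < sylvTailBound g c (k + 1) := by
  have : (0 : ℝ) < g := by exact_mod_cast hg
  have hT1 : (1 : ℝ) ≤ tsylv g (k + 1) := by exact_mod_cast tsylv_pos hg k
  rw [sylvTailBound, sylvTailBound, tsylv_add_two, sylv_eq_tsylv_add_one]
  push_cast
  set T := (tsylv g (k + 1) : ℝ)
  have hpow : T * 2 ^ (c + 1) ≤ (T + 1) ^ (c + 1) :=
    calc T * 2 ^ (c + 1) = 2 ^ (c - 1) * (4 * T) := by
          rw [show c + 1 = c - 1 + 2 by omega, pow_add]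
          ring
      _ ≤ (T + 1) ^ (c - 1) * (T + 1) ^ 2 := by
          gcongr
          · linarith
          · nlinarith [sq_nonneg (T - 1)]
      _ = (T + 1) ^ (c + 1) := by rw [← pow_add, show c - 1 + 2 = c + 1 by omega]
  have hnum : ((c : ℝ) + 3) ^ (c + 1) < 2 ^ (c + 1) * (c + 2) ^ c := by
    exact_mod_cast add_three_pow_lt hc
  calc T / g * ((c + 1 + 2) * T) ^ (c + 1) = T ^ (c + 1) / g * (T * (c + 3) ^ (c + 1)) := by
        rw [mul_pow]
        ring
    _ < T ^ (c + 1) / g * (T * (2 ^ (c + 1) * (c + 2) ^ c)) := by gcongr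
    _ = T ^ (c + 1) / g * (T * 2 ^ (c + 1) * (c + 2) ^ c) := by ring
    _ ≤ T ^ (c + 1) / g * ((T + 1) ^ (c + 1) * (c + 2) ^ c) := by gcongr
    _ = T * (T + 1) / g * ((c + 2) * (T * (T + 1))) ^ c := by
        rw [mul_pow, mul_pow]
        ring

theorem sylvTailBound_le_sylvTailBound_two (hg : 0 < g) {c k m : ℕ} (hc : 2 ≤ c)
    (h : k + c = m + 2) : sylvTailBound g c k ≤ sylvTailBound g 2 m := by
  induction c, hc using Nat.le_induction generalizing k with
  | base => rw [Nat.add_right_cancel h]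
  | succ c hc ih => exact (sylvTailBound_lt_of_two_le hg hc k).le.trans (ih (by omega))

theorem sylvTailBound_one (g k : ℕ) : sylvTailBound g 1 k = 3 * (tsylv g (k + 1) : ℝ) ^ 2 / g := by
  rw [sylvTailBound]
  push_cast
  ring

theorem sylvTailBound_two_sub (hg : 0 < g) (k : ℕ) :
    sylvTailBound g 1 (k + 1) - sylvTailBound g 2 k =
      (tsylv g (k + 1) : ℝ) ^ 2 / g * ((3 * tsylv g (k + 1) - 1) * (tsylv g (k + 1) - 3)) := by
  have : (g : ℝ) ≠ 0 := by exact_mod_cast hg.ne'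
  rw [sylvTailBound, sylvTailBound, tsylv_add_two, sylv_eq_tsylv_add_one]
  push_cast
  field_simp
  ring

theorem sylvTailBound_two_le (hg : 0 < g) {k : ℕ} (hT : 3 ≤ tsylv g (k + 1)) :
    sylvTailBound g 2 k ≤ sylvTailBound g 1 (k + 1) := by
  have hTR : (3 : ℝ) ≤ tsylv g (k + 1) := by exact_mod_cast hT
  rw [← sub_nonneg, sylvTailBound_two_sub hg]
  exact mul_nonneg (by positivity) (mul_nonneg (by linarith) (by linarith))

theorem tsylv_eq_three_of_sylvTailBound_eq (hg : 0 < g) {k : ℕ}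
    (h : sylvTailBound g 2 k = sylvTailBound g 1 (k + 1)) : tsylv g (k + 1) = 3 := by
  have : (g : ℝ) ≠ 0 := by exact_mod_cast hg.ne'
  have hT1 : (1 : ℝ) ≤ tsylv g (k + 1) := by exact_mod_cast tsylv_pos hg k
  have hzero := sylvTailBound_two_sub hg k
  rw [h, sub_self, eq_comm, mul_eq_zero, mul_eq_zero] at hzero
  rcases hzero with hzero | hzero | hzero
  · exact absurd hzero (by positivity)
  · linarith
  · exact_mod_cast sub_eq_zero.1 hzero

/-- The denominators `s_{g,1}, …, s_{g,n}, 3 t_{g,n+1}, 3 t_{g,n+1}, 3 t_{g,n+1}`, indexed from `0`,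
of the extremal decomposition of `1 / g` into `n + 3` unit fractions. -/
def extremalDenom (g n i : ℕ) : ℕ := if i < n then sylv g (i + 1) else 3 * tsylv g (n + 1)

theorem eq_extremalDenom_of_prod_eq (hg : 0 < g) (hA : ∀ i, 0 < A i) (hmono : Monotone A) {n : ℕ}
    (hsum : ∑ i ∈ range (n + 3), 1 / (A i : ℝ) = 1 / g)
    (hprod : ∏ i ∈ range (n + 1), (A i : ℝ) = sylvTailBound g 1 n)
    (hsylv : ∀ i < n, A i = sylv g (i + 1)) {i : ℕ} (hi : i < n + 3) :
    A i = extremalDenom g n i := by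
  have hgR : (0 : ℝ) < g := by exact_mod_cast hg
  have hT : (0 : ℝ) < tsylv g (n + 1) := by exact_mod_cast tsylv_pos hg n
  rw [extremalDenom]
  split_ifs with hin
  · exact hsylv i hin
  have hAn : (A n : ℝ) = 3 * tsylv g (n + 1) := by
    have hprod_sylv : ∏ i ∈ range n, (A i : ℝ) = tsylv g (n + 1) / g := by
      rw [eq_div_iff hgR.ne', mul_comm, tsylv_eq_mul_prod]
      push_cast
      rw [prod_congr rfl fun i hi => by rw [hsylv i (mem_range.1 hi)]]
    rw [prod_range_succ, hprod_sylv, sylvTailBound_one] at hprod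
    field_simp at hprod
    linarith
  have hrem : unitFractionRem g A n * A n = (n + 3 - n : ℕ) := by
    have := sum_one_div_sylv_sub hg A n
    rw [sum_eq_zero fun i hi => by rw [hsylv i (mem_range.1 hi), sub_self], eq_comm,
      sub_eq_zero] at this
    rw [this, hAn, Nat.add_sub_cancel_left]
    field_simp
    norm_num
  rw [eq_of_unitFractionRem_mul_eq hA hmono hsum (by omega) hrem (not_lt.1 hin) hi]
  exact_mod_cast hAn

theorem eq_four_or_eq_twelve {a b : ℕ} (ha : 3 < a) (hab : a ≤ b) (hmul : a * b = 144)
    (hle : 48 ≤ 3 * a + b) : a = 4 ∨ a = 12 := by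
  have : a ≤ 12 := by nlinarith
  by_contra! hne
  have : (a - 4 : ℤ) * (a - 12) < 0 := mul_neg_of_pos_of_neg (by omega) (by omega)
  zify at hle hmul
  nlinarith

theorem eq_extremalDenom_or_eq_twelve (hA : ∀ i, 0 < A i) (hmono : Monotone A)
    (hsum : ∑ i ∈ range 4, 1 / (A i : ℝ) = 1 / (3 : ℕ)) (hprod : A 0 * A 1 = 144) :
    (∀ i < 4, A i = extremalDenom 3 1 i) ∨ ∀ i < 4, A i = 12 := by
  have hA0 : (0 : ℝ) < A 0 := by exact_mod_cast hA 0
  have hprodR : (A 0 : ℝ) * A 1 = 144 := by exact_mod_cast hprod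
  have hrem : unitFractionRem 3 A 1 = 1 / 3 - 1 / A 0 := by simp [unitFractionRem]
  have hrem_mul : unitFractionRem 3 A 1 * A 1 = (48 - A 1) / A 0 := by
    rw [hrem, eq_div_iff hA0.ne']
    field_simp
    linarith
  have hgt : 3 < A 0 := by
    have := unitFractionRem_pos hA hsum (k := 1) (by omega)
    rw [hrem, sub_pos] at this
    exact_mod_cast lt_of_one_div_lt_one_div hA0 this
  have hquad : (48 : ℝ) ≤ 3 * A 0 + A 1 := by
    have := unitFractionRem_mul_le hA hmono hsum (k := 1) (by omega)
    rw [hrem_mul, div_le_iff₀ hA0] at this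
    norm_num at this
    linarith
  have htail (h : (48 - A 1 : ℝ) / A 0 = 3) {i : ℕ} (h1 : 1 ≤ i) (h4 : i < 4) : A i = A 1 :=
    eq_of_unitFractionRem_mul_eq hA hmono hsum (by omega) (by rw [hrem_mul, h]; norm_num) h1 h4
  rcases eq_four_or_eq_twelve hgt (hmono zero_le_one) hprod (by exact_mod_cast hquad) with h0 | h0
  · rw [h0] at hprod
    have h1 : A 1 = 36 := by omega
    refine Or.inl fun i hi => ?_
    rcases Nat.eq_zero_or_pos i with rfl | hi0
    · simp [extremalDenom, sylv, h0]
    · rw [htail (by rw [h0, h1]; norm_num) hi0 hi, h1]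
      simp [extremalDenom, tsylv, sylv, hi0.ne']
  · rw [h0] at hprod
    have h1 : A 1 = 12 := by omega
    refine Or.inr fun i hi => ?_
    rcases Nat.eq_zero_or_pos i with rfl | hi0
    · exact h0
    · rw [htail (by rw [h0, h1]; norm_num) hi0 hi, h1]

-- For `n ≠ 0`, `tsylv g n < 3` exactly when `(n, g)` is `(1, 1)`, `(1, 2)` or `(2, 1)`; there the
-- competing value `sylvTailBound g 2 (n - 1)` is the larger one.
theorem mul_prod_le_three_mul_tsylv_sq (hg : 0 < g) (hA : ∀ i, 0 < A i) (hmono : Monotone A) {n : ℕ}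
    (hT : n ≠ 0 → 3 ≤ tsylv g n) (hsum : ∑ i ∈ range (n + 3), 1 / (A i : ℝ) = 1 / g) :
    g * ∏ i ∈ range (n + 1), A i ≤ 3 * tsylv g (n + 1) ^ 2 ∧
      (g * ∏ i ∈ range (n + 1), A i = 3 * tsylv g (n + 1) ^ 2 →
        (∀ i < n + 3, A i = extremalDenom g n i) ∨ n = 1 ∧ g = 3 ∧ ∀ i < n + 3, A i = 12) := by
  have hgR : (0 : ℝ) < g := by exact_mod_cast hg
  suffices h : ∏ i ∈ range (n + 1), (A i : ℝ) ≤ sylvTailBound g 1 n ∧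
      (∏ i ∈ range (n + 1), (A i : ℝ) = sylvTailBound g 1 n →
        (∀ i < n + 3, A i = extremalDenom g n i) ∨ n = 1 ∧ g = 3 ∧ ∀ i < n + 3, A i = 12) by
    rw [sylvTailBound_one, le_div_iff₀' hgR, eq_div_iff hgR.ne', mul_comm _ (g : ℝ)] at h
    exact_mod_cast h
  obtain ⟨c, k, hc, hkc, hle, hsylv⟩ := exists_prod_le_sylvTailBound hg hA hmono hsum
  rcases (Nat.succ_le_of_lt hc).eq_or_lt with rfl | hc2
  · obtain rfl : k = n := Nat.add_right_cancel hkc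
    exact ⟨hle, fun heq => Or.inl fun i hi =>
      eq_extremalDenom_of_prod_eq hg hA hmono hsum heq (hsylv heq) hi⟩
  obtain ⟨m, rfl⟩ : ∃ m, n = m + 1 := ⟨n - 1, by omega⟩
  have hle_two := hle.trans (sylvTailBound_le_sylvTailBound_two hg hc2 hkc)
  have htwo := sylvTailBound_two_le hg (hT m.succ_ne_zero)
  refine ⟨hle_two.trans htwo, fun heq => ?_⟩
  have hT3 := tsylv_eq_three_of_sylvTailBound_eq hg (htwo.antisymm (heq ▸ hle_two))
  obtain ⟨rfl, rfl⟩ := eq_zero_and_eq_three_of_tsylv_eq_three hg hT3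
  have h144 : A 0 * A 1 = 144 := by
    have ht : tsylv 3 (0 + 1 + 1) = 12 := by simp [tsylv, sylv]
    simp only [prod_range_succ, range_zero, prod_empty, one_mul, sylvTailBound_one, ht] at heq
    norm_num at heq
    exact_mod_cast heq
  exact (eq_extremalDenom_or_eq_twelve hA hmono hsum h144).imp_right fun h => ⟨rfl, rfl, h⟩

end Optimisation

/-! ### Lattice indices -/

section LatticeIndex

/-- The square matrix whose rows are all the `v i` with `i ≠ j`. -/
def facetMatrix {R : Type*} {d : ℕ} (v : Fin (d + 1) → Fin d → R) (j : Fin (d + 1)) :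
    Matrix (Fin d) (Fin d) R :=
  Matrix.of fun i => v (j.succAbove i)

theorem eq_of_dotProduct_facet_eq {R : Type*} [CommRing R] [IsDomain R] {d : ℕ}
    {p : Fin (d + 1) → Fin d → R} {j : Fin (d + 1)} (hdet : (facetMatrix p j).det ≠ 0)
    {x y : Fin d → R} (h : ∀ i, x ⬝ᵥ p (j.succAbove i) = y ⬝ᵥ p (j.succAbove i)) : x = y := by
  refine sub_eq_zero.1 (Matrix.eq_zero_of_mulVec_eq_zero hdet (funext fun i => ?_))
  refine (dotProduct_comm _ _).trans ?_
  change (x - y) ⬝ᵥ p (j.succAbove i) = 0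
  rw [sub_dotProduct, h, sub_self]

theorem index_closure_range_row {d : ℕ} {M : Matrix (Fin d) (Fin d) ℤ} (h : M.det ≠ 0) :
    (AddSubgroup.closure (Set.range M.row)).index = M.det.natAbs := by
  have hli := Matrix.linearIndependent_rows_of_det_ne_zero h
  rw [← Submodule.span_int_eq_addSubgroupClosure, AddSubgroup.index_eq_card]
  refine (Submodule.natAbs_det_basis_change (Pi.basisFun ℤ (Fin d)) _
    (Module.Basis.span hli)).symm.trans ?_
  rw [Module.Basis.det_apply, ← Matrix.det_transpose]
  congr 2
  ext i k
  simp [Module.Basis.toMatrix_apply, Module.Basis.span_apply]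

theorem addOrderOf_mul_index_sup_zmultiples {G : Type*} [AddCommGroup G] (B : AddSubgroup G)
    (x : G) : addOrderOf (x : G ⧸ B) * (B ⊔ AddSubgroup.zmultiples x).index = B.index := by
  have hmap : (B ⊔ AddSubgroup.zmultiples x).map (QuotientAddGroup.mk' B) =
      AddSubgroup.zmultiples (x : G ⧸ B) := by
    rw [AddSubgroup.map_sup, QuotientAddGroup.map_mk'_self, bot_sup_eq, AddMonoidHom.map_zmultiples,
      QuotientAddGroup.mk'_apply]
  have hindex := AddSubgroup.index_map_eq (B ⊔ AddSubgroup.zmultiples x)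
    (QuotientAddGroup.mk'_surjective B) (by rw [QuotientAddGroup.ker_mk']; exact le_sup_left)
  rw [← hindex, hmap, ← Nat.card_zmultiples, AddSubgroup.card_mul_index,
    AddSubgroup.index_eq_card]

theorem closure_range_succAbove_sup_zmultiples {G : Type*} [AddCommGroup G] {d : ℕ}
    (p : Fin (d + 1) → G) (j : Fin (d + 1)) :
    AddSubgroup.closure (Set.range fun i => p (j.succAbove i)) ⊔ AddSubgroup.zmultiples (p j) =
      AddSubgroup.closure (Set.range p) := by
  rw [AddSubgroup.zmultiples_eq_closure, ← AddSubgroup.closure_union]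
  congr 1
  ext x
  simp [Fin.exists_iff_succAbove j, eq_comm]

variable {d : ℕ} {p : Fin (d + 1) → Fin d → ℤ} {w : Fin (d + 1) → ℕ} {j : Fin (d + 1)}

theorem nsmul_mem_closure_facet_iff (hdet : (facetMatrix p j).det ≠ 0)
    (hbal : ∑ i, w i • p i = 0) (hgcd : Finset.univ.gcd w = 1) (n : ℕ) :
    n • p j ∈ AddSubgroup.closure (Set.range fun i => p (j.succAbove i)) ↔ w j ∣ n := by
  rw [Fin.sum_univ_succAbove _ j] at hbal
  constructor
  · rw [← Submodule.span_int_eq_addSubgroupClosure]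
    intro hmem
    obtain ⟨c, hc⟩ := (Submodule.mem_span_range_iff_exists_fun ℤ).1 hmem
    have hrel : ∑ i, ((w j : ℤ) * c i + n * w (j.succAbove i)) • p (j.succAbove i) = 0 := by
      simp only [add_smul, mul_smul, sum_add_distrib, ← smul_sum, hc, natCast_zsmul]
      rw [nsmul_left_comm, ← nsmul_add, hbal, nsmul_zero]
    have hli : LinearIndependent ℤ fun i => p (j.succAbove i) :=
      Matrix.linearIndependent_rows_of_det_ne_zero hdet
    have hzero := Fintype.linearIndependent_iff.1 hli _ hrel
    have hdvd (i) : w j ∣ n * w i := by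
      rcases Fin.eq_self_or_eq_succAbove j i with rfl | ⟨k, rfl⟩
      · exact dvd_mul_left _ _
      · have : (w j : ℤ) ∣ n * w (j.succAbove k) := ⟨-c k, by linarith [hzero k]⟩
        exact_mod_cast this
    simpa [Finset.gcd_mul_left, hgcd] using dvd_gcd (s := univ) fun i _ => hdvd i
  · rintro ⟨c, rfl⟩
    rw [mul_comm, mul_smul, eq_neg_of_add_eq_zero_left hbal]
    refine nsmul_mem (neg_mem (sum_mem fun i _ => nsmul_mem ?_ _)) _
    exact AddSubgroup.subset_closure ⟨i, rfl⟩

theorem natAbs_det_facetMatrix (hdet : (facetMatrix p j).det ≠ 0) (hbal : ∑ i, w i • p i = 0)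
    (hgcd : Finset.univ.gcd w = 1) : (facetMatrix p j).det.natAbs = w j * multOf p := by
  set B := AddSubgroup.closure (Set.range fun i => p (j.succAbove i)) with hB
  have hord : addOrderOf (p j : (Fin d → ℤ) ⧸ B) = w j := by
    refine Nat.dvd_right_iff_eq.1 fun n => ?_
    rw [addOrderOf_dvd_iff_nsmul_eq_zero, ← QuotientAddGroup.mk_nsmul,
      QuotientAddGroup.eq_zero_iff, hB, nsmul_mem_closure_facet_iff hdet hbal hgcd]
  rw [← hord, multOf, ← closure_range_succAbove_sup_zmultiples p j,
    addOrderOf_mul_index_sup_zmultiples, hB, ← index_closure_range_row hdet]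
  rfl

theorem IsPrimitive.exists_dotProduct_eq_one {x : Fin d → ℤ} (hx : IsPrimitive x) :
    ∃ y : Fin d → ℤ, y ⬝ᵥ x = 1 := by
  obtain ⟨y, hy⟩ := gcd_eq_sum_mul univ x
  exact ⟨y, by rw [← hx, hy, dotProduct_comm, dotProduct]⟩

/-- The subgroup of the `y` for which `y ⬝ᵥ x` is divisible by `n`. -/
def dvdDotProduct (n : ℕ) (x : Fin d → ℤ) : AddSubgroup (Fin d → ℤ) :=
  (AddSubgroup.zmultiples (n : ℤ)).comap (dotProductBilin ℤ ℤ x).toAddMonoidHom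

theorem mem_dvdDotProduct {n : ℕ} {x y : Fin d → ℤ} :
    y ∈ dvdDotProduct n x ↔ (n : ℤ) ∣ y ⬝ᵥ x := by
  simp [dvdDotProduct, dotProduct_comm x, Int.mem_zmultiples_iff]

theorem IsPrimitive.index_dvdDotProduct {x : Fin d → ℤ} (hx : IsPrimitive x) (n : ℕ) :
    (dvdDotProduct n x).index = n := by
  obtain ⟨y, hy⟩ := hx.exists_dotProduct_eq_one
  rw [dvdDotProduct, AddSubgroup.index_comap_of_surjective, Int.index_zmultiples,
    Int.natAbs_natCast]
  exact fun k => ⟨k • y, by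
    change x ⬝ᵥ (k • y) = k
    rw [dotProduct_smul, dotProduct_comm, hy, smul_eq_mul, mul_one]⟩

end LatticeIndex

section LcmWeight

variable {ι : Type*} {A : ι → ℕ}

theorem exists_prime_pow_dvd_of_dvd_lcm {s : Finset ι} (hA : ∀ i, 0 < A i) {p k : ℕ}
    (hp : p.Prime) (hk : k ≠ 0) (h : p ^ k ∣ s.lcm A) : ∃ i, p ^ k ∣ A i := by
  classical
  induction s using Finset.induction_on with
  | empty =>
    rw [lcm_empty, Nat.dvd_one] at h
    exact absurd h (Nat.one_lt_pow hk hp.one_lt).ne'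
  | insert a s _ ih =>
    have hs : s.lcm A ≠ 0 := fun h0 =>
      let ⟨i, _, hi⟩ := lcm_eq_zero_iff.1 h0
      (hA i).ne' hi
    have hlcm : p ^ k ∣ Nat.lcm (A a) (s.lcm A) := by rwa [lcm_insert] at h
    rw [hp.pow_dvd_iff_le_factorization (Nat.lcm_ne_zero (hA a).ne' hs),
      Nat.factorization_lcm (hA a).ne' hs, Finsupp.sup_apply, le_sup_iff,
      ← hp.pow_dvd_iff_le_factorization (hA a).ne', ← hp.pow_dvd_iff_le_factorization hs] at hlcm
    exact hlcm.elim (fun h => ⟨a, h⟩) ih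

variable [Fintype ι]

/-- The coprime integral weights proportional to `1 / A i`. -/
def lcmWeight (A : ι → ℕ) (i : ι) : ℕ := univ.lcm A / A i

theorem lcmWeight_mul (A : ι → ℕ) (i : ι) : lcmWeight A i * A i = univ.lcm A :=
  Nat.div_mul_cancel (dvd_lcm (mem_univ i))

theorem univ_lcm_pos (hA : ∀ i, 0 < A i) : 0 < univ.lcm A :=
  Nat.pos_of_ne_zero fun h =>
    let ⟨i, _, hi⟩ := lcm_eq_zero_iff.1 h
    (hA i).ne' hi

theorem gcd_lcmWeight [Nonempty ι] (hA : ∀ i, 0 < A i) : univ.gcd (lcmWeight A) = 1 := by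
  obtain ⟨i₀⟩ := ‹Nonempty ι›
  set c := univ.gcd (lcmWeight A)
  have hc (i) : c ∣ lcmWeight A i := gcd_dvd (mem_univ i)
  obtain ⟨e, he⟩ : c ∣ univ.lcm A := (hc i₀).trans ⟨A i₀, (lcmWeight_mul A i₀).symm⟩
  have hpos : 0 < c * e := he ▸ univ_lcm_pos hA
  have hdvd : univ.lcm A ∣ e := by
    refine lcm_dvd fun i _ => ?_
    obtain ⟨f, hf⟩ := hc i
    have := lcmWeight_mul A i
    rw [hf, he, mul_assoc] at this
    exact ⟨f, by rw [← Nat.eq_of_mul_eq_mul_left (Nat.pos_of_mul_pos_right hpos) this, mul_comm]⟩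
  rw [he] at hdvd
  have := Nat.le_of_dvd (Nat.pos_of_mul_pos_left hpos) hdvd
  nlinarith

theorem cast_lcmWeight {K : Type*} [Field K] [CharZero K] (hA : ∀ i, 0 < A i) (i : ι) :
    (lcmWeight A i : K) = (univ.lcm A : ℕ) / A i := by
  rw [eq_div_iff (by exact_mod_cast (hA i).ne')]
  exact_mod_cast lcmWeight_mul A i

end LcmWeight

/-! ### Dual pairs -/

/-- The integral data of a Fano simplex with vertices `v i` whose Gorenstein index divides `g`:
`m i` is `g` times the vertex of the dual simplex that is dual to the facet omitting `v i`, and the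
barycentric coordinates of the origin are `g / A i`. -/
structure IsDualPair {d : ℕ} (g : ℕ) (v m : Fin (d + 1) → Fin d → ℤ) (A : Fin (d + 1) → ℕ) :
    Prop where
  index_pos : 0 < g
  denom_pos : ∀ i, 0 < A i
  dotProduct_eq : ∀ i k, m i ⬝ᵥ v k = (if i = k then (A i : ℤ) else 0) - g
  balanced : ∀ j, ∑ i, (v i j : ℚ) / A i = 0
  isPrimitive : ∀ i, IsPrimitive (v i)

theorem det_diagonal_sub_const {K ι : Type*} [Field K] [Fintype ι] [DecidableEq ι] {a : ι → K}
    (ha : ∀ i, a i ≠ 0) (c : K) :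
    (Matrix.diagonal a - Matrix.of fun _ _ => c).det = (∏ i, a i) * (1 - c * ∑ i, 1 / a i) := by
  let u : Matrix ι Unit K := Matrix.replicateCol Unit fun i => -c / a i
  let e : Matrix Unit ι K := Matrix.replicateRow Unit 1
  have hfactor : (Matrix.diagonal a - Matrix.of fun _ _ => c) =
      Matrix.diagonal a * (1 + u * e) := by
    ext i k
    have hai := ha i
    rw [Matrix.diagonal_mul, Matrix.add_apply, Matrix.mul_apply, Fintype.sum_unique,
      Matrix.one_apply, Matrix.sub_apply, Matrix.diagonal_apply]
    simp only [u, e, Matrix.of_apply, Matrix.replicateCol_apply, Matrix.replicateRow_apply,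
      Pi.one_apply]
    split_ifs
    · field_simp
      ring
    · field_simp
      ring
  rw [hfactor, Matrix.det_mul, Matrix.det_one_add_replicateCol_mul_replicateRow,
    Matrix.det_diagonal, dotProduct, mul_sum, sub_eq_add_neg, ← sum_neg_distrib]
  congr 2
  exact sum_congr rfl fun i _ => by rw [Pi.one_apply]; ring

namespace IsDualPair

variable {d g : ℕ} {v m : Fin (d + 1) → Fin d → ℤ} {A : Fin (d + 1) → ℕ}

theorem sum_dotProduct_div (h : IsDualPair g v m A) (x : Fin d → ℤ) :
    ∑ i, ((x ⬝ᵥ v i : ℤ) : ℚ) / A i = 0 := by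
  simp only [dotProduct, Int.cast_sum, Int.cast_mul, sum_div, mul_div_assoc]
  rw [sum_comm]
  simp only [← mul_sum, h.balanced, mul_zero, sum_const_zero]

theorem sum_one_div (h : IsDualPair g v m A) : ∑ i, 1 / (A i : ℚ) = 1 / g := by
  have hg : (g : ℚ) ≠ 0 := by exact_mod_cast h.index_pos.ne'
  have hA0 : (A 0 : ℚ) ≠ 0 := by exact_mod_cast (h.denom_pos 0).ne'
  have hpair := h.sum_dotProduct_div (m 0)
  simp only [h.dotProduct_eq, Int.cast_sub, sub_div, sum_sub_distrib, Int.cast_natCast,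
    apply_ite (Int.cast : ℤ → ℚ), Int.cast_zero, ite_div, zero_div, sum_ite_eq, mem_univ, if_true,
    div_self hA0, div_eq_mul_one_div (g : ℚ), ← mul_sum] at hpair
  rw [eq_div_iff hg]
  linarith

theorem comp_perm (h : IsDualPair g v m A) (σ : Equiv.Perm (Fin (d + 1))) :
    IsDualPair g (v ∘ σ) (m ∘ σ) (A ∘ σ) where
  index_pos := h.index_pos
  denom_pos i := h.denom_pos (σ i)
  dotProduct_eq i k := by simpa using h.dotProduct_eq (σ i) (σ k)
  balanced j := (Equiv.sum_comp σ fun i => (v i j : ℚ) / A i).trans (h.balanced j)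
  isPrimitive i := h.isPrimitive (σ i)

theorem det_facetMatrix_mul_det_facetMatrix (h : IsDualPair g v m A) (j : Fin (d + 1)) :
    (facetMatrix m j).det * (facetMatrix v j).det * A j = g * ∏ i, (A (j.succAbove i) : ℤ) := by
  have hA (i) : (A i : ℚ) ≠ 0 := by exact_mod_cast (h.denom_pos i).ne'
  have hg : (g : ℚ) ≠ 0 := by exact_mod_cast h.index_pos.ne'
  have hprod : (facetMatrix m j * (facetMatrix v j).transpose).map (Int.cast : ℤ → ℚ) =
      Matrix.diagonal (fun i => (A (j.succAbove i) : ℚ)) - Matrix.of fun _ _ => (g : ℚ) := by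
    ext i k
    have := h.dotProduct_eq (j.succAbove i) (j.succAbove k)
    simp only [Matrix.map_apply, Matrix.mul_apply', Matrix.sub_apply, Matrix.diagonal_apply]
    refine (congrArg (Int.cast : ℤ → ℚ) this).trans ?_
    simp [apply_ite (Int.cast : ℤ → ℚ)]
  have hsum := h.sum_one_div
  rw [Fin.sum_univ_succAbove _ j, ← eq_sub_iff_add_eq'] at hsum
  have hdet := congrArg Matrix.det hprod
  rw [← Int.cast_det, Matrix.det_mul, Matrix.det_transpose, det_diagonal_sub_const fun i => hA _,
    hsum] at hdet
  rw [← Int.cast_inj (α := ℚ), Int.cast_mul, hdet]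
  push_cast
  have := hA j
  field_simp
  ring

theorem det_facetMatrix_ne_zero (h : IsDualPair g v m A) (j : Fin (d + 1)) :
    (facetMatrix m j).det ≠ 0 ∧ (facetMatrix v j).det ≠ 0 := by
  have hpos : (0 : ℤ) < g * ∏ i, (A (j.succAbove i) : ℤ) := by
    have := h.index_pos
    have := fun i => h.denom_pos i
    exact_mod_cast Nat.mul_pos ‹0 < g› (prod_pos fun i _ => this (j.succAbove i))
  rw [← h.det_facetMatrix_mul_det_facetMatrix] at hpos
  exact mul_ne_zero_iff.1 (left_ne_zero_of_mul hpos.ne')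

theorem ext_dotProduct (h : IsDualPair g v m A) {x y : Fin d → ℤ}
    (hxy : ∀ k, x ⬝ᵥ v k = y ⬝ᵥ v k) : x = y :=
  eq_of_dotProduct_facet_eq (h.det_facetMatrix_ne_zero 0).2 fun _ => hxy _

theorem mul_sum_lcmWeight (h : IsDualPair g v m A) : g * ∑ i, lcmWeight A i = univ.lcm A := by
  have hg : (g : ℚ) ≠ 0 := by exact_mod_cast h.index_pos.ne'
  have hsum : ∑ i, (lcmWeight A i : ℚ) = (univ.lcm A : ℕ) * ∑ i, 1 / (A i : ℚ) := by
    simp only [cast_lcmWeight h.denom_pos, mul_sum, mul_one_div]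
  rw [← Nat.cast_inj (R := ℚ), Nat.cast_mul, Nat.cast_sum, hsum, h.sum_one_div]
  field_simp

theorem sum_lcmWeight_smul_vertex (h : IsDualPair g v m A) : ∑ i, lcmWeight A i • v i = 0 := by
  funext j
  rw [← Int.cast_inj (α := ℚ)]
  simp only [Finset.sum_apply, Pi.smul_apply]
  simp only [nsmul_eq_mul, Int.cast_sum, Int.cast_mul, Int.cast_natCast,
    cast_lcmWeight h.denom_pos, div_mul_eq_mul_div, mul_div_assoc, ← mul_sum, h.balanced, mul_zero,
    Pi.zero_apply, Int.cast_zero]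

theorem sum_lcmWeight_smul_dual (h : IsDualPair g v m A) : ∑ i, lcmWeight A i • m i = 0 := by
  refine h.ext_dotProduct fun k => ?_
  have hsum : (g : ℤ) * ∑ i, (lcmWeight A i : ℤ) = lcmWeight A k * A k := by
    exact_mod_cast h.mul_sum_lcmWeight.trans (lcmWeight_mul A k).symm
  simp only [sum_dotProduct, smul_dotProduct, h.dotProduct_eq]
  simp only [nsmul_eq_mul, mul_sub,
    sum_sub_distrib, mul_ite, mul_zero, sum_ite_eq', mem_univ, if_true, zero_dotProduct,
    ← sum_mul, ← hsum]
  ring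

theorem natAbs_det_facetMatrix_vertex (h : IsDualPair g v m A) (j : Fin (d + 1)) :
    (facetMatrix v j).det.natAbs = lcmWeight A j * multOf v :=
  natAbs_det_facetMatrix (h.det_facetMatrix_ne_zero j).2 h.sum_lcmWeight_smul_vertex
    (gcd_lcmWeight h.denom_pos)

theorem natAbs_det_facetMatrix_dual (h : IsDualPair g v m A) (j : Fin (d + 1)) :
    (facetMatrix m j).det.natAbs = lcmWeight A j * multOf m :=
  natAbs_det_facetMatrix (h.det_facetMatrix_ne_zero j).1 h.sum_lcmWeight_smul_dual
    (gcd_lcmWeight h.denom_pos)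

theorem multOf_mul_multOf_mul_lcm_sq (h : IsDualPair g v m A) :
    multOf v * multOf m * univ.lcm A ^ 2 = g * ∏ i, A i := by
  have hdet := congrArg Int.natAbs (h.det_facetMatrix_mul_det_facetMatrix 0)
  rw [Int.natAbs_mul, Int.natAbs_mul, Int.natAbs_mul, h.natAbs_det_facetMatrix_dual,
    h.natAbs_det_facetMatrix_vertex, ← Nat.cast_prod] at hdet
  simp only [Int.natAbs_natCast] at hdet
  rw [← lcmWeight_mul A 0, Fin.prod_univ_succAbove _ 0, mul_left_comm, ← hdet]
  ring

theorem closure_dual_le_dvdDotProduct (h : IsDualPair g v m A) {n : ℕ} {i : Fin (d + 1)}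
    (hg : n ∣ g) (hi : n ∣ A i) :
    AddSubgroup.closure (Set.range m) ≤ dvdDotProduct n (v i) := by
  rw [AddSubgroup.closure_le]
  rintro _ ⟨l, rfl⟩
  rw [SetLike.mem_coe, mem_dvdDotProduct, h.dotProduct_eq]
  refine dvd_sub ?_ (by exact_mod_cast hg)
  split_ifs with hl
  · exact_mod_cast hl ▸ hi
  · exact dvd_zero _

theorem dvd_multOf_dual (h : IsDualPair g v m A) : g ∣ multOf m := by
  rw [Nat.dvd_iff_prime_pow_dvd_dvd]
  intro p k hp hk
  rcases eq_or_ne k 0 with rfl | hk0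
  · simp
  obtain ⟨i, hi⟩ := exists_prime_pow_dvd_of_dvd_lcm h.denom_pos hp hk0
    (hk.trans ⟨_, h.mul_sum_lcmWeight.symm⟩)
  rw [← (h.isPrimitive i).index_dvdDotProduct (p ^ k)]
  exact AddSubgroup.index_dvd_of_le (h.closure_dual_le_dvdDotProduct hk hi)

theorem mem_closure_dual_iff (h : IsDualPair g v m A) (hm : multOf m = g) {i : Fin (d + 1)}
    (hi : g ∣ A i) {x : Fin d → ℤ} :
    x ∈ AddSubgroup.closure (Set.range m) ↔ (g : ℤ) ∣ x ⬝ᵥ v i := by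
  have hle := h.closure_dual_le_dvdDotProduct dvd_rfl hi
  have hindex := AddSubgroup.relIndex_mul_index hle
  rw [(h.isPrimitive i).index_dvdDotProduct] at hindex
  have hrel := Nat.eq_of_mul_eq_mul_right h.index_pos (hindex.trans (hm.trans (one_mul g).symm))
  rw [le_antisymm hle (AddSubgroup.relIndex_eq_one.1 hrel), mem_dvdDotProduct]

theorem multOf_mul_lcm_sq_le (h : IsDualPair g v m A) :
    multOf v * univ.lcm A ^ 2 ≤ ∏ i, A i := by
  have hprod : 0 < ∏ i, A i := prod_pos fun i _ => h.denom_pos i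
  obtain ⟨c, hc⟩ := h.dvd_multOf_dual
  have hmul : multOf v * univ.lcm A ^ 2 * c = ∏ i, A i := by
    refine Nat.eq_of_mul_eq_mul_left h.index_pos ?_
    rw [← h.multOf_mul_multOf_mul_lcm_sq, hc]
    ring
  rw [← hmul] at hprod ⊢
  exact Nat.le_mul_of_pos_right _ (Nat.pos_of_mul_pos_left hprod)

theorem multOf_le_prod {n : ℕ} {v m : Fin (n + 3) → Fin (n + 2) → ℤ}
    {A : Fin (n + 3) → ℕ} (h : IsDualPair g v m A) :
    multOf v ≤ ∏ i : Fin (n + 1), A i.castSucc.castSucc := by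
  have hlcm := univ_lcm_pos h.denom_pos
  have hle (i) : A i ≤ univ.lcm A := Nat.le_of_dvd hlcm (dvd_lcm (mem_univ i))
  refine Nat.le_of_mul_le_mul_right (h.multOf_mul_lcm_sq_le.trans ?_) (pow_pos hlcm 2)
  rw [Fin.prod_univ_castSucc, Fin.prod_univ_castSucc, mul_assoc, sq]
  gcongr <;> exact hle _

end IsDualPair

section DualBody

variable {d : ℕ} {p : Fin (d + 1) → Fin d → ℚ} {w : Fin (d + 1) → ℚ} {c : ℚ}

theorem smul_dualBody_simplexHull (hc : 0 < c) :
    c • dualBody (simplexHull p) = {x | ∀ i, -c ≤ x ⬝ᵥ p i} := by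
  ext x
  rw [Set.mem_smul_set_iff_inv_smul_mem₀ hc.ne', Set.mem_ofPred_eq]
  have hscale (y : Fin d → ℚ) : -1 ≤ (c⁻¹ • x) ⬝ᵥ y ↔ -c ≤ x ⬝ᵥ y := by
    rw [smul_dotProduct, smul_eq_mul, ← div_eq_inv_mul, le_div_iff₀ hc, neg_one_mul]
  constructor
  · exact fun h i => (hscale _).1 (h _ (subset_convexHull ℚ _ ⟨i, rfl⟩))
  · intro h y hy
    refine (hscale y).2 (convexHull_min ?_ ?_ hy : y ∈ {y | -c ≤ x ⬝ᵥ y})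
    · rintro _ ⟨i, rfl⟩
      exact h i
    · exact convex_halfSpace_ge (dotProductBilin ℚ ℚ x).isLinear _

theorem IsLatticeSet.exists_eq_toQ {S : Set (Fin d → ℚ)} (hS : IsLatticeSet S) {x : Fin d → ℚ}
    (hx : x ∈ S.extremePoints ℚ) : ∃ z : Fin d → ℤ, x = toQ z := by
  rw [hS] at hx
  choose z hz using (extremePoints_convexHull_subset hx).2
  exact ⟨z, funext hz⟩

theorem mem_extremePoints_smul_dualBody (hc : 0 < c) {j : Fin (d + 1)}
    (hdet : (facetMatrix p j).det ≠ 0) {x : Fin d → ℚ}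
    (hx : ∀ i, x ⬝ᵥ p (j.succAbove i) = -c) (hj : -c ≤ x ⬝ᵥ p j) :
    x ∈ (c • dualBody (simplexHull p)).extremePoints ℚ := by
  rw [smul_dualBody_simplexHull hc, mem_extremePoints_iff_left]
  refine ⟨fun i => ?_, ?_⟩
  · rcases Fin.eq_self_or_eq_succAbove j i with rfl | ⟨k, rfl⟩
    · exact hj
    · exact (hx k).ge
  · rintro y hy z hz ⟨a, b, ha, hb, hab, rfl⟩
    refine eq_of_dotProduct_facet_eq hdet fun i => ?_
    have hyi := hy (j.succAbove i)
    have hzi := hz (j.succAbove i)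
    have hxi := hx i
    rw [hxi]
    rw [add_dotProduct, smul_dotProduct, smul_dotProduct, smul_eq_mul, smul_eq_mul] at hxi
    nlinarith

theorem det_facetMatrix_ne_zero_of_affineIndependent (hp : AffineIndependent ℚ p)
    (hsum : ∑ i, w i = 1) (hbal : ∑ i, w i • p i = 0) {j : Fin (d + 1)} (hw : w j ≠ 0) :
    (facetMatrix p j).det ≠ 0 := by
  intro hdet
  obtain ⟨c, hc0, hc⟩ := Matrix.exists_vecMul_eq_zero_iff.2 hdet
  have hc' : ∑ i, c i • p (j.succAbove i) = 0 := (Matrix.vecMul_eq_sum _ _).symm.trans hc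
  have hzero (i) : j.insertNth (α := fun _ => ℚ) 0 c i - (∑ k, c k) * w i = 0 := by
    refine affineIndependent_iff.1 hp univ
      (fun i => j.insertNth (α := fun _ => ℚ) 0 c i - (∑ k, c k) * w i) ?_ ?_ i (mem_univ i)
    · rw [sum_sub_distrib, ← mul_sum, hsum, Fin.sum_univ_succAbove _ j]
      simp
    · simp only [sub_smul, sum_sub_distrib, mul_smul, ← smul_sum, hbal, smul_zero, sub_zero]
      rw [Fin.sum_univ_succAbove _ j]
      simpa using hc'
  have hcsum : ∑ k, c k = 0 := by simpa [hw] using hzero j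
  exact hc0 (funext fun i => by simpa [hcsum] using hzero (j.succAbove i))

theorem exists_dotProduct_eq_ite_sub_one (hp : AffineIndependent ℚ p) (hsum : ∑ i, w i = 1)
    (hbal : ∑ i, w i • p i = 0) {j : Fin (d + 1)} (hw : w j ≠ 0) :
    ∃ u : Fin d → ℚ, ∀ i, u ⬝ᵥ p i = (if j = i then 1 / w j else 0) - 1 := by
  set M := facetMatrix p j with hM
  have hdet : IsUnit M.det := (det_facetMatrix_ne_zero_of_affineIndependent hp hsum hbal hw).isUnit
  set u := M⁻¹.mulVec fun _ => -1 with hu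
  have hfacet (i) : u ⬝ᵥ p (j.succAbove i) = -1 := by
    have hMu : M.mulVec u = fun _ => -1 := by
      rw [hu, Matrix.mulVec_mulVec, Matrix.mul_nonsing_inv _ hdet, Matrix.one_mulVec]
    exact (dotProduct_comm _ _).trans (congrFun hMu i)
  have hrel : ∑ i, w i * (u ⬝ᵥ p i) = 0 := by
    simp only [← smul_eq_mul, ← dotProduct_smul, ← dotProduct_sum, hbal, dotProduct_zero]
  refine ⟨u, fun i => ?_⟩
  rcases Fin.eq_self_or_eq_succAbove j i with rfl | ⟨k, rfl⟩
  · rw [Fin.sum_univ_succAbove _ i] at hrel hsum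
    simp only [hfacet, mul_neg_one, sum_neg_distrib] at hrel
    rw [if_pos rfl]
    field_simp
    linarith
  · rw [hfacet, if_neg (Fin.succAbove_ne j k).symm, zero_sub]

end DualBody

section GorensteinIndex

variable {d g : ℕ} {v m : Fin (d + 1) → Fin d → ℤ} {A : Fin (d + 1) → ℕ}

@[simp]
theorem toQ_dotProduct_toQ (x y : Fin d → ℤ) : toQ x ⬝ᵥ toQ y = (x ⬝ᵥ y : ℤ) := by
  simp [toQ, dotProduct]

theorem isLatticeSet_gorensteinIndex {p : Fin (d + 1) → Fin d → ℚ}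
    (h : gorensteinIndex p ≠ 0) :
    IsLatticeSet ((gorensteinIndex p : ℚ) • dualBody (simplexHull p)) :=
  (Nat.sInf_mem (Nat.nonempty_of_pos_sInf (Nat.pos_of_ne_zero h))).2

theorem IsFanoSimplex.exists_isDualPair (hv : IsFanoSimplex v)
    (hg : gorensteinIndex (fun i => toQ (v i)) ≠ 0) :
    ∃ m A, IsDualPair (gorensteinIndex fun i => toQ (v i)) v m A := by
  obtain ⟨hp, hprim, w, hw, hsum, hbal⟩ := hv
  set g := gorensteinIndex fun i => toQ (v i)
  have hgpos : (0 : ℚ) < g := by exact_mod_cast Nat.pos_of_ne_zero hg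
  have hbal' : ∑ i, w i • toQ (v i) = 0 := funext fun j => by simpa using hbal j
  have hdual (j) : ∃ m : Fin d → ℤ,
      ∀ i, ((m ⬝ᵥ v i : ℤ) : ℚ) = (if j = i then g / w j else 0) - g := by
    obtain ⟨u, hu⟩ := exists_dotProduct_eq_ite_sub_one hp hsum hbal' (hw j).ne'
    have hgu (i) : ((g : ℚ) • u) ⬝ᵥ toQ (v i) = (if j = i then g / w j else 0) - g := by
      rw [smul_dotProduct, hu, smul_eq_mul, mul_sub, mul_ite, mul_one_div, mul_zero, mul_one]
    obtain ⟨m, hm⟩ := (isLatticeSet_gorensteinIndex hg).exists_eq_toQ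
      (mem_extremePoints_smul_dualBody hgpos
        (det_facetMatrix_ne_zero_of_affineIndependent hp hsum hbal' (hw j).ne')
        (x := (g : ℚ) • u)
        (fun i => by rw [hgu, if_neg (Fin.succAbove_ne j i).symm, zero_sub])
        (by
          rw [hgu, if_pos rfl]
          linarith [div_pos hgpos (hw j)]))
    exact ⟨m, fun i => by rw [← hgu, hm, toQ_dotProduct_toQ]⟩
  choose m hm using hdual
  have hA (i) : ((m i ⬝ᵥ v i + g : ℤ) : ℚ) = g / w i := by
    rw [Int.cast_add, hm, if_pos rfl, Int.cast_natCast, sub_add_cancel]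
  have hApos (i) : 0 < m i ⬝ᵥ v i + g := by
    have := div_pos hgpos (hw i)
    rw [← hA] at this
    exact_mod_cast this
  have hAcast (i) : (((m i ⬝ᵥ v i + g).toNat : ℕ) : ℚ) = g / w i := by
    rw [← hA, ← Int.cast_natCast, Int.toNat_of_nonneg (hApos i).le]
  refine ⟨m, fun i => (m i ⬝ᵥ v i + g).toNat, Nat.pos_of_ne_zero hg, fun i => by
    simpa using hApos i, fun i k => ?_, fun j => ?_, hprim⟩
  · rw [← Int.cast_inj (α := ℚ), hm]
    push_cast
    rw [hAcast]
  · simp only [hAcast, div_div_eq_mul_div, mul_comm (v _ j : ℚ), ← sum_div]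
    rw [div_eq_zero_iff]
    exact Or.inl (hbal j)

end GorensteinIndex

/-! ### The simplices attaining the bound -/

section SylvesterProducts

/-- The product `s_{g,1} ⋯ s_{g,n}`, which equals `t_{g,n+1} / g`. -/
def sylvProd (g n : ℕ) : ℕ := ∏ k ∈ range n, sylv g (k + 1)

/-- The product of the `s_{g,j+1}` over all `j < n` other than `k`. -/
def sylvProdErase (g n k : ℕ) : ℕ := ∏ j ∈ (range n).erase k, sylv g (j + 1)

variable {g n k : ℕ}

theorem sylvProd_pos (g n : ℕ) : 0 < sylvProd g n :=
  prod_pos fun k _ => sylv_pos g k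

theorem sylvProd_succ (g n : ℕ) : sylvProd g (n + 1) = sylvProd g n * sylv g (n + 1) :=
  prod_range_succ _ n

theorem tsylv_eq_mul_sylvProd (g n : ℕ) : tsylv g (n + 1) = g * sylvProd g n :=
  tsylv_eq_mul_prod g n

theorem extremalDenom_of_lt (hk : k < n) : extremalDenom g n k = sylv g (k + 1) := if_pos hk

theorem extremalDenom_of_le (hk : n ≤ k) : extremalDenom g n k = 3 * (g * sylvProd g n) := by
  rw [extremalDenom, if_neg hk.not_gt, tsylv_eq_mul_sylvProd]

theorem sylv_eq_mul_sylvProd_add_one (g n : ℕ) : sylv g (n + 1) = g * sylvProd g n + 1 := by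
  rw [sylv_eq_tsylv_add_one, tsylv_eq_mul_sylvProd]

theorem sylvProdErase_mul_sylv (hk : k < n) :
    sylvProdErase g n k * sylv g (k + 1) = sylvProd g n :=
  prod_erase_mul _ _ (mem_range.2 hk)

theorem sylvProdErase_succ_of_lt (hk : k < n) :
    sylvProdErase g (n + 1) k = sylvProdErase g n k * sylv g (n + 1) := by
  refine Nat.eq_of_mul_eq_mul_right (sylv_pos g k) ?_
  rw [sylvProdErase_mul_sylv (by lia), sylvProd_succ, ← sylvProdErase_mul_sylv hk]
  ring

theorem sylvProdErase_succ_self (g n : ℕ) : sylvProdErase g (n + 1) n = sylvProd g n := by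
  refine Nat.eq_of_mul_eq_mul_right (sylv_pos g n) ?_
  rw [sylvProdErase_mul_sylv (by lia), sylvProd_succ]

theorem mul_sum_sylvProdErase_add_one (g n : ℕ) :
    g * ∑ k ∈ range n, sylvProdErase g n k + 1 = sylvProd g n := by
  induction n with
  | zero => simp [sylvProd]
  | succ n ih =>
    have hsum : ∑ k ∈ range n, sylvProdErase g (n + 1) k =
        (∑ k ∈ range n, sylvProdErase g n k) * sylv g (n + 1) := by
      rw [sum_mul]
      exact sum_congr rfl fun k hk => sylvProdErase_succ_of_lt (mem_range.1 hk)
    rw [sum_range_succ, sylvProdErase_succ_self, hsum, sylvProd_succ]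
    calc g * ((∑ k ∈ range n, sylvProdErase g n k) * sylv g (n + 1) + sylvProd g n) + 1
        = g * (∑ k ∈ range n, sylvProdErase g n k) * sylv g (n + 1) +
            (g * sylvProd g n + 1) := by ring
      _ = (g * ∑ k ∈ range n, sylvProdErase g n k + 1) * sylv g (n + 1) := by
        rw [← sylv_eq_mul_sylvProd_add_one]
        ring
      _ = sylvProd g n * sylv g (n + 1) := by rw [ih]

end SylvesterProducts

section SylvesterDualFamily

variable {d g n : ℕ} {v m : Fin (d + 1) → Fin d → ℤ} {A : Fin (d + 1) → ℕ} {F : ℕ → Fin d → ℤ}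

/-- `F 0, …, F (n - 1)` are dual to `v 0, …, v (n - 1)` and take on the remaining vertices the
values that are forced when the first `n` denominators are Sylvester numbers. -/
def IsSylvDualFamily (g n : ℕ) (v : Fin (d + 1) → Fin d → ℤ) (F : ℕ → Fin d → ℤ) : Prop :=
  ∀ k < n, ∀ i : Fin (d + 1), F k ⬝ᵥ v i =
    if i.val < n then (if i.val = k then 1 else 0) else -(g * sylvProdErase g n k : ℤ)

/-- The projection of `x` along `F 0, …, F (n - 1)` onto the functionals that vanish on
`v 0, …, v (n - 1)`. -/
def clearAlong (v : Fin (d + 1) → Fin d → ℤ) (F : ℕ → Fin d → ℤ) (n : ℕ) (x : Fin d → ℤ) :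
    Fin d → ℤ :=
  x - ∑ k ∈ range n, (x ⬝ᵥ v (Fin.ofNat (d + 1) k)) • F k

namespace IsSylvDualFamily

theorem clearAlong_dotProduct_of_lt (hF : IsSylvDualFamily g n v F) (x : Fin d → ℤ)
    {i : Fin (d + 1)} (hi : i.val < n) : clearAlong v F n x ⬝ᵥ v i = 0 := by
  have hsum : ∀ k ∈ range n, (x ⬝ᵥ v (Fin.ofNat (d + 1) k)) * (F k ⬝ᵥ v i) =
      if i.val = k then x ⬝ᵥ v (Fin.ofNat (d + 1) k) else 0 := fun k hk => by
    rw [hF k (mem_range.1 hk), if_pos hi, mul_ite, mul_one, mul_zero]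
  simp only [clearAlong, sub_dotProduct, sum_dotProduct, smul_dotProduct, smul_eq_mul]
  rw [sum_congr rfl hsum, sum_ite_eq, if_pos (mem_range.2 hi), Fin.ofNat_val_eq_self, sub_self]

theorem clearAlong_dotProduct_of_le (hF : IsSylvDualFamily g n v F) (x : Fin d → ℤ)
    {i : Fin (d + 1)} (hi : n ≤ i.val) : clearAlong v F n x ⬝ᵥ v i =
      x ⬝ᵥ v i + g * ∑ k ∈ range n, (x ⬝ᵥ v (Fin.ofNat (d + 1) k)) * sylvProdErase g n k := by
  simp only [clearAlong, sub_dotProduct, sum_dotProduct, smul_dotProduct, smul_eq_mul]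
  rw [sub_eq_add_neg, ← sum_neg_distrib, mul_sum]
  congr 1
  refine sum_congr rfl fun k hk => ?_
  rw [hF k (mem_range.1 hk), if_neg hi.not_gt]
  ring

theorem clearAlong_dual_dotProduct (h : IsDualPair g v m A) (hF : IsSylvDualFamily g n v F)
    {l i : Fin (d + 1)} (hl : n ≤ l.val) (hi : n ≤ i.val) :
    clearAlong v F n (m l) ⬝ᵥ v i = (if l = i then (A l : ℤ) else 0) - g * sylvProd g n := by
  have hml (k) (hk : k ∈ range n) : m l ⬝ᵥ v (Fin.ofNat (d + 1) k) = -g := by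
    have hkn := mem_range.1 hk
    rw [h.dotProduct_eq, if_neg, zero_sub]
    rintro rfl
    rw [Fin.val_ofNat, Nat.mod_eq_of_lt (hkn.trans_le (hi.trans i.is_lt.le))] at hl
    lia
  rw [hF.clearAlong_dotProduct_of_le _ hi, h.dotProduct_eq, sum_congr rfl fun k hk =>
    congrArg (· * (sylvProdErase g n k : ℤ)) (hml k hk), ← mul_sum,
    ← mul_sum_sylvProdErase_add_one]
  push_cast
  ring

end IsSylvDualFamily

-- Passing from `n` to `n + 1` is one step of Gauss elimination.
theorem IsDualPair.exists_isSylvDualFamily (h : IsDualPair g v m A) (hn : n ≤ d + 1)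
    (hA : ∀ i : Fin (d + 1), i.val < n → A i = sylv g (i + 1)) :
    ∃ F, IsSylvDualFamily g n v F := by
  induction n with
  | zero => exact ⟨0, fun k hk => absurd hk k.not_lt_zero⟩
  | succ n ih =>
    obtain ⟨F, hF⟩ := ih (by lia) fun i hi => hA i (by lia)
    let l : Fin (d + 1) := ⟨n, hn⟩
    set G := clearAlong v F n (m l)
    have hG (i : Fin (d + 1)) (hi : n ≤ i.val) :
        G ⬝ᵥ v i = if i.val = n then 1 else -(g * sylvProd g n : ℤ) := by
      rw [hF.clearAlong_dual_dotProduct h le_rfl hi, hA l n.lt_succ_self,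
        sylv_eq_mul_sylvProd_add_one]
      simp only [Fin.ext_iff, l, eq_comm (a := n)]
      push_cast
      split_ifs <;> ring
    refine ⟨fun k => if k = n then G else F k + (g * sylvProdErase g n k : ℤ) • G,
      fun k hk i => ?_⟩
    rcases lt_or_ge i.val n with hi | hi
    · have hGi : G ⬝ᵥ v i = 0 := hF.clearAlong_dotProduct_of_lt _ hi
      rcases eq_or_ne k n with rfl | hkn
      · simp [hGi, hi.ne, hi.trans k.lt_succ_self]
      · simp only [hkn, if_false, add_dotProduct, smul_dotProduct, hGi, smul_zero, add_zero]
        rw [hF k (by lia), if_pos hi, if_pos (hi.trans n.lt_succ_self)]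
    · rcases eq_or_ne k n with rfl | hkn
      · simp only [if_true, hG i hi, sylvProdErase_succ_self]
        split_ifs <;> first | rfl | lia
      · have hkn' : k < n := by lia
        simp only [hkn, if_false, add_dotProduct, smul_dotProduct, smul_eq_mul, hG i hi,
          hF k hkn' i, hi.not_gt, sylvProdErase_succ_of_lt hkn', sylv_eq_mul_sylvProd_add_one]
        push_cast
        split_ifs <;> lia

end SylvesterDualFamily

section Isomorphism

variable {d : ℕ}

theorem multOf_comp_perm (v : Fin (d + 1) → Fin d → ℤ) (σ : Equiv.Perm (Fin (d + 1))) :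
    multOf (v ∘ σ) = multOf v := by
  rw [multOf, multOf, EquivLike.range_comp]

theorem IsIsomorphicToQ.of_comp_perm {v : Fin (d + 1) → Fin d → ℤ}
    {w : Fin (d + 1) → Fin d → ℚ} {σ : Equiv.Perm (Fin (d + 1))}
    (h : IsIsomorphicToQ (v ∘ σ) w) : IsIsomorphicToQ v w := by
  obtain ⟨U, τ, hU, hτ⟩ := h
  exact ⟨U, σ.symm.trans τ, hU, fun i => by simpa using hτ (σ.symm i)⟩

theorem lcmWeight_eq_one {ι : Type*} [Fintype ι] {A : ι → ℕ} {i : ι} (hi : 0 < A i)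
    (h : ∀ k, A k ∣ A i) : lcmWeight A i = 1 := by
  rw [lcmWeight, Nat.dvd_antisymm (lcm_dvd fun k _ => h k) (dvd_lcm (mem_univ i)), Nat.div_self hi]

theorem IsDualPair.isIsomorphicToQ_of_rows {g : ℕ} {v m w : Fin (d + 1) → Fin d → ℤ}
    {A : Fin (d + 1) → ℕ} (h : IsDualPair g v m A) {U : Fin d → Fin d → ℤ}
    (hU : ∀ i j, U j ⬝ᵥ v i = w i j) {i₀ : Fin (d + 1)} (hi₀ : lcmWeight A i₀ = 1)
    (hw : (facetMatrix w i₀).det.natAbs = multOf v) :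
    IsIsomorphicToQ v fun i => toQ (w i) := by
  have hmul : facetMatrix w i₀ = facetMatrix v i₀ * (Matrix.of U).transpose := by
    ext i j
    rw [Matrix.mul_apply']
    exact (hU _ _).symm.trans (dotProduct_comm _ _)
  have hv : (facetMatrix v i₀).det.natAbs = multOf v := by
    rw [h.natAbs_det_facetMatrix_vertex, hi₀, one_mul]
  have hpos : multOf v ≠ 0 := hv ▸ Int.natAbs_ne_zero.2 (h.det_facetMatrix_ne_zero i₀).2
  refine ⟨Matrix.of U, 1, Int.isUnit_iff_natAbs_eq.2 ?_, fun i => funext fun j => ?_⟩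
  · rw [hmul, Matrix.det_mul, Int.natAbs_mul, hv, Matrix.det_transpose] at hw
    exact Nat.eq_of_mul_eq_mul_left (Nat.pos_of_ne_zero hpos) (hw.trans (mul_one _).symm)
  · exact (toQ_dotProduct_toQ _ _).trans (congrArg _ (hU i j))

end Isomorphism

section ExtremalVertices

variable {g n : ℕ}

/-- The integral form of the columns of `PgenMult g (n + 2) a`: since
`t_{g,n+1} / g = s_{g,1} ⋯ s_{g,n}`, the quotients `(t_{g,n+1} / g) / s_{g,k}` are the integers
`sylvProdErase g n (k - 1)`. -/
def extremalVertex (g n : ℕ) (a : ℕ → ℤ) (i : Fin (n + 3)) (j : Fin (n + 2)) : ℤ :=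
  if i.val < n then if j.val = i.val then 1 else 0
  else if i.val = n then
    if j.val < n then sylvProd g n - g * sylvProdErase g n j
    else if j.val = n then sylvProd g n else 0
  else if i.val = n + 1 then
    if j.val < n + 1 then a (j + 1) else 3 * (g * sylvProd g n)
  else if j.val < n then -(sylvProd g n + 2 * g * sylvProdErase g n j + a (j + 1))
  else if j.val = n then -(sylvProd g n + a (n + 1)) else -(3 * (g * sylvProd g n))

theorem sylv_add_div_mul_sylvProd {k : ℕ} (hk : k < n) (c : ℚ) :
    (sylv g (k + 1) + c) / sylv g (k + 1) * sylvProd g n =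
      sylvProd g n + c * sylvProdErase g n k := by
  have : (sylv g (k + 1) : ℚ) ≠ 0 := by exact_mod_cast (sylv_pos g k).ne'
  rw [← sylvProdErase_mul_sylv hk]
  push_cast
  field_simp

theorem tsylv_div (hg : 0 < g) (n : ℕ) : (tsylv g (n + 1) : ℚ) / g = sylvProd g n := by
  have : (g : ℚ) ≠ 0 := by exact_mod_cast hg.ne'
  rw [tsylv_eq_mul_sylvProd]
  push_cast
  field_simp

theorem toQ_extremalVertex (hg : 0 < g) (a : ℕ → ℤ) (i : Fin (n + 3)) :
    toQ (extremalVertex g n a i) = PgenMult g (n + 2) (fun k => a k) i := by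
  funext j
  have hsub (hj : j.val < n) := sylv_add_div_mul_sylvProd (g := g) hj (-g)
  have hadd (hj : j.val < n) := sylv_add_div_mul_sylvProd (g := g) hj (2 * g)
  simp only [toQ, extremalVertex, PgenMult, Nat.add_sub_cancel,
    show n + 2 - 1 = n + 1 from rfl, tsylv_div hg]
  rw [tsylv_eq_mul_sylvProd]
  simp only [sub_eq_add_neg] at hsub ⊢
  push_cast
  rcases lt_or_ge j.val n with hj | hj
  · simp only [hj, if_true, hsub hj, hadd hj]
    split_ifs <;> first | rfl | ring
  · simp only [hj.not_gt, if_false]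

theorem natAbs_det_facetMatrix_extremalVertex (g n : ℕ) (a : ℕ → ℤ) :
    (facetMatrix (extremalVertex g n a) (Fin.last (n + 2))).det.natAbs =
      3 * g * sylvProd g n ^ 2 := by
  rw [Matrix.det_of_isLowerTriangular, Fin.prod_univ_castSucc, Fin.prod_univ_castSucc]
  · have hone (j : Fin n) : facetMatrix (extremalVertex g n a) (Fin.last (n + 2))
        j.castSucc.castSucc j.castSucc.castSucc = 1 := by simp [facetMatrix, extremalVertex]
    simp only [hone, prod_const_one]
    simp [facetMatrix, extremalVertex, Int.natAbs_mul]
    ring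
  · intro i j hij
    have hij : i.val < j.val := hij
    simp only [facetMatrix, Matrix.of_apply, Fin.succAbove_last, extremalVertex, Fin.val_castSucc]
    split_ifs <;> first | rfl | lia

end ExtremalVertices

section ExtremalRows

variable {g n : ℕ} {v m : Fin (n + 3) → Fin (n + 2) → ℤ} {A : Fin (n + 3) → ℕ}
  {F : ℕ → Fin (n + 2) → ℤ}

theorem IsDualPair.sub_dotProduct_eq (h : IsDualPair g v m A) (k l i : Fin (n + 3)) :
    (m k - m l) ⬝ᵥ v i = (if i = k then (A i : ℤ) else 0) - if i = l then (A i : ℤ) else 0 := by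
  rw [sub_dotProduct, h.dotProduct_eq, h.dotProduct_eq]
  grind

theorem IsDualPair.sum_dotProduct_last_three (h : IsDualPair g v m A) {c : ℕ}
    (hA : ∀ i : Fin (n + 3), n ≤ i.val → A i = c) {x : Fin (n + 2) → ℤ}
    (hx : ∀ i : Fin (n + 3), i.val < n → x ⬝ᵥ v i = 0) :
    x ⬝ᵥ v (Fin.last n).castSucc.castSucc + x ⬝ᵥ v (Fin.last (n + 1)).castSucc +
      x ⬝ᵥ v (Fin.last (n + 2)) = 0 := by
  have hsum := h.sum_dotProduct_div x
  have hc : (c : ℚ) ≠ 0 := by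
    rw [← hA (Fin.last (n + 2)) (by simp)]
    exact_mod_cast (h.denom_pos _).ne'
  have hzero (i : Fin n) : x ⬝ᵥ v i.castSucc.castSucc.castSucc = 0 := hx _ i.is_lt
  rw [Fin.sum_univ_castSucc, Fin.sum_univ_castSucc, Fin.sum_univ_castSucc] at hsum
  simp only [hzero, Int.cast_zero, zero_div, sum_const_zero, zero_add] at hsum
  rw [hA _ (by simp), hA _ (by simp), hA _ (by simp), ← add_div, ← add_div, div_eq_zero_iff,
    or_iff_left hc] at hsum
  exact_mod_cast hsum

theorem IsSylvDualFamily.exists_dotProduct_eq_sylvProd (hF : IsSylvDualFamily g n v F)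
    (h : IsDualPair g v m A) :
    ∃ x : Fin (n + 2) → ℤ, (∀ i : Fin (n + 3), i.val < n → x ⬝ᵥ v i = 0) ∧
      x ⬝ᵥ v (Fin.last n).castSucc.castSucc = sylvProd g n := by
  obtain ⟨y, hy⟩ := (h.isPrimitive (Fin.last n).castSucc.castSucc).exists_dotProduct_eq_one
  set z := ∑ k ∈ range n, (y ⬝ᵥ v (Fin.ofNat (n + 3) k)) * sylvProdErase g n k with hz
  -- The two summands take the values `1 + g * z` and `-(g * sylvProd g n)` before scaling.
  refine ⟨(sylvProd g n : ℤ) • clearAlong v F n y +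
    z • clearAlong v F n (m (Fin.last (n + 1)).castSucc), fun i hi => ?_, ?_⟩
  · rw [add_dotProduct, smul_dotProduct, smul_dotProduct, hF.clearAlong_dotProduct_of_lt _ hi,
      hF.clearAlong_dotProduct_of_lt _ hi, smul_zero, smul_zero, add_zero]
  · rw [add_dotProduct, smul_dotProduct, smul_dotProduct,
      hF.clearAlong_dotProduct_of_le _ (by simp), hF.clearAlong_dual_dotProduct h (by simp)
      (by simp), hy, ← hz, if_neg (by simp [Fin.ext_iff])]
    simp only [smul_eq_mul]
    ring

theorem IsSylvDualFamily.exists_dotProduct_last_three (hF : IsSylvDualFamily g n v F)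
    (h : IsDualPair g v m A)
    (hA : ∀ i : Fin (n + 3), n ≤ i.val → A i = 3 * (g * sylvProd g n)) :
    ∃ (x : Fin (n + 2) → ℤ) (b : ℤ), (g * sylvProd g n : ℤ) < b ∧
      (∀ i : Fin (n + 3), i.val < n → x ⬝ᵥ v i = 0) ∧
      x ⬝ᵥ v (Fin.last n).castSucc.castSucc = sylvProd g n ∧
      x ⬝ᵥ v (Fin.last (n + 1)).castSucc = b ∧
      x ⬝ᵥ v (Fin.last (n + 2)) = -(sylvProd g n + b) := by
  have hpos : (0 : ℤ) < g * sylvProd g n := by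
    exact_mod_cast Nat.mul_pos h.index_pos (sylvProd_pos g n)
  obtain ⟨x, hx_lt, hx_mid⟩ := hF.exists_dotProduct_eq_sylvProd h
  set q := m (Fin.last (n + 1)).castSucc - m (Fin.last (n + 2)) with hq
  have hq_zero (i : Fin (n + 3)) (hi : i.val ≤ n) : q ⬝ᵥ v i = 0 := by
    rw [hq, h.sub_dotProduct_eq]
    simp [Fin.ext_iff, show i.val ≠ n + 1 by lia, show i.val ≠ n + 2 by lia]
  have hq_pos : q ⬝ᵥ v (Fin.last (n + 1)).castSucc = 3 * (g * sylvProd g n) := by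
    rw [hq, h.sub_dotProduct_eq, if_pos rfl, if_neg (by simp [Fin.ext_iff]), hA _ (by simp)]
    push_cast
    ring
  -- A large multiple of `q` makes the value at the penultimate vertex large.
  set N := |x ⬝ᵥ v (Fin.last (n + 1)).castSucc| + 1 with hN
  have hsum_lt (i : Fin (n + 3)) (hi : i.val < n) : (x + N • q) ⬝ᵥ v i = 0 := by
    rw [add_dotProduct, smul_dotProduct, hx_lt i hi, hq_zero i hi.le, smul_zero, add_zero]
  have hsum_mid : (x + N • q) ⬝ᵥ v (Fin.last n).castSucc.castSucc = sylvProd g n := by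
    rw [add_dotProduct, smul_dotProduct, hx_mid, hq_zero _ (by simp), smul_zero, add_zero]
  refine ⟨x + N • q, _, ?_, hsum_lt, hsum_mid, rfl, ?_⟩
  · rw [add_dotProduct, smul_dotProduct, hq_pos, hN, smul_eq_mul]
    nlinarith [neg_abs_le (x ⬝ᵥ v (Fin.last (n + 1)).castSucc),
      abs_nonneg (x ⬝ᵥ v (Fin.last (n + 1)).castSucc)]
  · have := h.sum_dotProduct_last_three hA hsum_lt
    rw [hsum_mid] at this
    linarith

theorem sylvProdErase_le {k : ℕ} (hk : k < n) : sylvProdErase g n k ≤ sylvProd g n :=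
  Nat.le_of_dvd (sylvProd_pos g n) ⟨_, (sylvProdErase_mul_sylv hk).symm⟩

theorem eq_castSucc_or_last (i : Fin (n + 3)) : i.val < n ∨
    i = (Fin.last n).castSucc.castSucc ∨ i = (Fin.last (n + 1)).castSucc ∨
      i = Fin.last (n + 2) := by
  simp only [Fin.ext_iff, Fin.val_castSucc, Fin.val_last]
  lia

theorem lcmWeight_last_eq_one (hg : 0 < g)
    (hsylv : ∀ i : Fin (n + 3), i.val < n → A i = sylv g (i + 1))
    (hA : ∀ i : Fin (n + 3), n ≤ i.val → A i = 3 * (g * sylvProd g n)) :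
    lcmWeight A (Fin.last (n + 2)) = 1 := by
  have hlast : A (Fin.last (n + 2)) = 3 * (g * sylvProd g n) := hA _ (by simp)
  refine lcmWeight_eq_one ?_ fun i => ?_
  · have := sylvProd_pos g n
    rw [hlast]
    positivity
  · rw [hlast]
    rcases lt_or_ge i.val n with hi | hi
    · rw [hsylv i hi, ← sylvProdErase_mul_sylv hi, ← mul_assoc, ← mul_assoc]
      exact dvd_mul_left _ _
    · rw [hA i hi]

theorem IsSylvDualFamily.row_dotProduct_eq_extremalVertex (hF : IsSylvDualFamily g n v F)
    (h : IsDualPair g v m A)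
    (hA : ∀ i : Fin (n + 3), n ≤ i.val → A i = 3 * (g * sylvProd g n)) {x : Fin (n + 2) → ℤ}
    {a : ℕ → ℤ} (ha : ∀ k < n, a (k + 1) = a (n + 1) - g * sylvProdErase g n k)
    (hx : ∀ i : Fin (n + 3), i.val < n → x ⬝ᵥ v i = 0)
    (hx_mid : x ⬝ᵥ v (Fin.last n).castSucc.castSucc = sylvProd g n)
    (hx_pos : x ⬝ᵥ v (Fin.last (n + 1)).castSucc = a (n + 1))
    (hx_neg : x ⬝ᵥ v (Fin.last (n + 2)) = -(sylvProd g n + a (n + 1)))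
    (i : Fin (n + 3)) (j : Fin (n + 2)) :
    (if j.val < n then F j + x else if j.val = n then x
      else m (Fin.last (n + 1)).castSucc - m (Fin.last (n + 2))) ⬝ᵥ v i =
      extremalVertex g n a i j := by
  split_ifs with hj hjn
  · rw [add_dotProduct, hF j hj]
    rcases eq_castSucc_or_last i with hi | rfl | rfl | rfl <;>
      simp only [extremalVertex, Fin.val_castSucc, Fin.val_last] <;> grind
  · rcases eq_castSucc_or_last i with hi | rfl | rfl | rfl <;>
      simp only [extremalVertex, Fin.val_castSucc, Fin.val_last] <;> grind
  · have := hA i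
    rw [h.sub_dotProduct_eq]
    simp only [extremalVertex, Fin.ext_iff, Fin.val_castSucc, Fin.val_last]
    grind

theorem IsDualPair.exists_isIsomorphicToQ_PgenMult (h : IsDualPair g v m A)
    (hsylv : ∀ i : Fin (n + 3), i.val < n → A i = sylv g (i + 1))
    (hA : ∀ i : Fin (n + 3), n ≤ i.val → A i = 3 * (g * sylvProd g n))
    (hv : multOf v = 3 * g * sylvProd g n ^ 2) :
    ∃ a : ℕ → ℤ, (∀ k, 1 ≤ k → k ≤ n + 1 → 1 ≤ a k) ∧
      IsIsomorphicToQ v (PgenMult g (n + 2) fun k => a k) := by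
  obtain ⟨F, hF⟩ := h.exists_isSylvDualFamily (by lia) hsylv
  obtain ⟨x, b, hb, hx_lt, hx_mid, hx_pos, hx_neg⟩ := hF.exists_dotProduct_last_three h hA
  let a (k : ℕ) : ℤ := if k ≤ n then b - g * sylvProdErase g n (k - 1) else b
  have ha_last : a (n + 1) = b := if_neg (by lia)
  have ha (k) (hk : k < n) : a (k + 1) = a (n + 1) - g * sylvProdErase g n k :=
    (if_pos hk).trans (ha_last ▸ rfl)
  refine ⟨a, fun k hk _ => ?_, ?_⟩
  · have hpos : (0 : ℤ) ≤ g * sylvProd g n := by positivity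
    simp only [a]
    split_ifs with hkn
    · have hle : g * sylvProdErase g n (k - 1) ≤ g * sylvProd g n :=
        Nat.mul_le_mul_left g (sylvProdErase_le (by lia))
      zify at hle
      linarith
    · linarith
  · rw [← funext (toQ_extremalVertex h.index_pos a)]
    rw [← ha_last] at hx_pos hx_neg
    exact h.isIsomorphicToQ_of_rows
      (hF.row_dotProduct_eq_extremalVertex h hA ha hx_lt hx_mid hx_pos hx_neg)
      (lcmWeight_last_eq_one h.index_pos hsylv hA)
      ((natAbs_det_facetMatrix_extremalVertex g n a).trans hv.symm)

end ExtremalRows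

section ExceptionalSimplex

/-- The integral form of the columns of `Pexc33 3`. -/
def exceptionalVertex : Fin 4 → Fin 3 → ℤ :=
  ![![1, 0, 0], ![1, 12, 0], ![5, 0, 12], ![-7, -12, -12]]

theorem toQ_exceptionalVertex (i : Fin 4) : toQ (exceptionalVertex i) = Pexc33 3 i := by
  funext j
  fin_cases i <;> fin_cases j <;> norm_num [toQ, exceptionalVertex, Pexc33]

theorem natAbs_det_facetMatrix_exceptionalVertex :
    (facetMatrix exceptionalVertex (Fin.last 3)).det.natAbs = 144 := by
  rw [Matrix.det_fin_three]
  rfl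

namespace IsDualPair

section ConstantDenominator

variable {d g c : ℕ} {v m : Fin (d + 1) → Fin d → ℤ}

theorem sum_dotProduct_eq_zero (h : IsDualPair g v m fun _ => c) (x : Fin d → ℤ) :
    ∑ i, x ⬝ᵥ v i = 0 := by
  have hsum := h.sum_dotProduct_div x
  have hc : (c : ℚ) ≠ 0 := by exact_mod_cast (h.denom_pos 0).ne'
  rw [← sum_div, div_eq_zero_iff, or_iff_left hc] at hsum
  exact_mod_cast hsum

theorem dvd_dotProduct_sub_of_mem_closure_dual (h : IsDualPair g v m fun _ => c) {x : Fin d → ℤ}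
    (hx : x ∈ AddSubgroup.closure (Set.range m)) (i j : Fin (d + 1)) :
    (c : ℤ) ∣ x ⬝ᵥ v i - x ⬝ᵥ v j := by
  have hle : AddSubgroup.closure (Set.range m) ≤ dvdDotProduct c (v i - v j) := by
    rw [AddSubgroup.closure_le]
    rintro _ ⟨l, rfl⟩
    rw [SetLike.mem_coe, mem_dvdDotProduct, dotProduct_sub, h.dotProduct_eq, h.dotProduct_eq,
      sub_sub_sub_cancel_right]
    split_ifs <;> simp
  rw [← dotProduct_sub]
  exact mem_dvdDotProduct.1 (hle hx)

theorem exists_dotProduct_eq_of_dvd_sub (h : IsDualPair g v m fun _ => c) {y : Fin d → ℤ}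
    {t : Fin (d + 1) → ℤ} (hdvd : ∀ i, (c : ℤ) ∣ y ⬝ᵥ v i - t i) (ht : ∑ i, t i = 0) :
    ∃ x : Fin d → ℤ, ∀ i, x ⬝ᵥ v i = t i := by
  choose b hb using hdvd
  have hc : (c : ℤ) ≠ 0 := by exact_mod_cast (h.denom_pos 0).ne'
  have hb_sum : ∑ i, b i = 0 := by
    refine (mul_eq_zero_iff_left hc).1 ?_
    rw [mul_sum, ← sum_congr rfl fun i _ => hb i, sum_sub_distrib, h.sum_dotProduct_eq_zero, ht,
      sub_zero]
  refine ⟨y - ∑ i, b i • m i, fun k => ?_⟩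
  simp only [sub_dotProduct, sum_dotProduct, smul_dotProduct, smul_eq_mul, h.dotProduct_eq,
    mul_sub, sum_sub_distrib, ← sum_mul, hb_sum, zero_mul, sub_zero, mul_ite, mul_zero,
    sum_ite_eq', mem_univ, if_true]
  linarith [hb k]

end ConstantDenominator

variable {v m : Fin 4 → Fin 3 → ℤ}

theorem exists_dotProduct_emod (h : IsDualPair 3 v m fun _ => 12) (hm : multOf m = 3) :
    ∃ y : Fin 3 → ℤ, y ⬝ᵥ v 0 = 1 ∧ ∀ i, y ⬝ᵥ v i % 12 = 1 ∨ y ⬝ᵥ v i % 12 = 5 := by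
  obtain ⟨y, hy⟩ := (h.isPrimitive 0).exists_dotProduct_eq_one
  have hmem (x : Fin 3 → ℤ) (i : Fin 4) :
      x ∈ AddSubgroup.closure (Set.range m) ↔ (3 : ℤ) ∣ x ⬝ᵥ v i :=
    h.mem_closure_dual_iff hm (by norm_num)
  refine ⟨y, hy, fun i => ?_⟩
  have hthree : ¬(3 : ℤ) ∣ y ⬝ᵥ v i := by
    rw [← hmem, hmem y 0, hy]
    norm_num
  have hfour : (12 : ℤ) ∣ 3 * (y ⬝ᵥ v i) - 3 * (y ⬝ᵥ v 0) := by
    have := h.dvd_dotProduct_sub_of_mem_closure_dual (x := (3 : ℤ) • y)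
      ((hmem _ 0).2 (by simp only [smul_dotProduct, smul_eq_mul, dvd_mul_right])) i 0
    simpa only [smul_dotProduct, smul_eq_mul, Nat.cast_ofNat] using this
  lia

-- Among the four residues, whose sum is divisible by 12, two are 1 and two are 5.
theorem exists_perm_dvd_dotProduct_sub (h : IsDualPair 3 v m fun _ => 12) (hm : multOf m = 3) :
    ∃ (y : Fin 3 → ℤ) (σ : Equiv.Perm (Fin 4)),
      ∀ i, (12 : ℤ) ∣ y ⬝ᵥ v (σ i) - exceptionalVertex i 0 := by
  obtain ⟨y, hy, hmod⟩ := h.exists_dotProduct_emod hm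
  have hsum := h.sum_dotProduct_eq_zero y
  rw [Fin.sum_univ_four] at hsum
  have hcases : ∃ σ : Equiv.Perm (Fin 4), σ 0 = 0 ∧ y ⬝ᵥ v (σ 1) % 12 = 1 ∧
      y ⬝ᵥ v (σ 2) % 12 = 5 ∧ y ⬝ᵥ v (σ 3) % 12 = 5 := by
    rcases hmod 1, hmod 2, hmod 3 with ⟨h₁ | h₁, h₂ | h₂, h₃ | h₃⟩ <;> first | lia | skip
    · exact ⟨1, rfl, h₁, h₂, h₃⟩
    · exact ⟨Equiv.swap 1 2, rfl, h₂, h₁, h₃⟩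
    · exact ⟨Equiv.swap 1 3, rfl, h₃, h₂, h₁⟩
  obtain ⟨σ, hσ₀, hσ₁, hσ₂, hσ₃⟩ := hcases
  refine ⟨y, σ, fun i => ?_⟩
  fin_cases i <;> simp [exceptionalVertex] <;> grind

theorem isIsomorphicToQ_Pexc33 (h : IsDualPair 3 v m fun _ => 12) (hv : multOf v = 144) :
    IsIsomorphicToQ v (Pexc33 3) := by
  have hm : multOf m = 3 := by
    have := h.multOf_mul_multOf_mul_lcm_sq
    rw [hv, show univ.lcm (fun _ : Fin 4 => 12) = 12 by decide] at this
    norm_num at this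
    lia
  obtain ⟨y, σ, hy⟩ := h.exists_perm_dvd_dotProduct_sub hm
  have hσ : IsDualPair 3 (v ∘ σ) (m ∘ σ) fun _ => 12 := h.comp_perm σ
  have hrow (j : Fin 3) : ∃ x : Fin 3 → ℤ, ∀ i, x ⬝ᵥ (v ∘ σ) i = exceptionalVertex i j := by
    refine hσ.exists_dotProduct_eq_of_dvd_sub (y := if j = 0 then y else 0) (fun i => ?_) ?_
    · match j with
      | 0 => exact hy i
      | 1 | 2 => fin_cases i <;> simp [exceptionalVertex]
    · fin_cases j <;> decide
  choose U hU using hrow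
  rw [← funext toQ_exceptionalVertex]
  exact (hσ.isIsomorphicToQ_of_rows (fun i j => hU j i)
    (lcmWeight_eq_one (i := Fin.last 3) (by norm_num) fun _ => dvd_rfl)
    (by rw [natAbs_det_facetMatrix_exceptionalVertex, multOf_comp_perm, hv])).of_comp_perm

end IsDualPair

end ExceptionalSimplex

/-! ### The extremal simplex for odd index -/

namespace IsDualPair

variable {d g : ℕ} {v m : Fin (d + 1) → Fin d → ℤ} {A : Fin (d + 1) → ℕ}

theorem toQ_dotProduct_eq (h : IsDualPair g v m A) (i k : Fin (d + 1)) :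
    toQ (m i) ⬝ᵥ toQ (v k) = (if i = k then (A i : ℚ) else 0) - g := by
  rw [toQ_dotProduct_toQ, h.dotProduct_eq]
  push_cast
  rfl

theorem cast_denom_pos (h : IsDualPair g v m A) (i : Fin (d + 1)) : (0 : ℚ) < A i :=
  Nat.cast_pos.2 (h.denom_pos i)

theorem sum_index_div (h : IsDualPair g v m A) : ∑ i, (g : ℚ) / A i = 1 := by
  simp only [div_eq_mul_one_div (g : ℚ), ← mul_sum, h.sum_one_div]
  exact mul_one_div_cancel (Nat.cast_ne_zero.2 h.index_pos.ne')

theorem sum_index_div_smul (h : IsDualPair g v m A) : ∑ i, ((g : ℚ) / A i) • toQ (v i) = 0 := by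
  funext j
  simp only [Finset.sum_apply, Pi.smul_apply, smul_eq_mul, toQ, div_mul_eq_mul_div, mul_div_assoc,
    ← mul_sum, h.balanced, mul_zero, Pi.zero_apply]

theorem affineIndependent (h : IsDualPair g v m A) :
    AffineIndependent ℚ fun i => toQ (v i) := by
  refine affineIndependent_iff.2 fun s w hw hsum k hk => ?_
  have hpair := congrArg (toQ (m k) ⬝ᵥ ·) hsum
  simp only [dotProduct_sum, dotProduct_smul, h.toQ_dotProduct_eq, smul_eq_mul, mul_sub, mul_ite,
    mul_zero, sum_sub_distrib, sum_ite_eq, hk, if_true, ← sum_mul, hw, zero_mul, sub_zero,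
    dotProduct_zero] at hpair
  exact (mul_eq_zero.1 hpair).resolve_right (h.cast_denom_pos k).ne'

theorem isFanoSimplex (h : IsDualPair g v m A) : IsFanoSimplex v :=
  ⟨h.affineIndependent, h.isPrimitive, fun i => (g : ℚ) / A i,
    fun i => div_pos (Nat.cast_pos.2 h.index_pos) (h.cast_denom_pos i), h.sum_index_div,
    fun j => by simpa using congrFun h.sum_index_div_smul j⟩

theorem det_facetMatrix_toQ_ne_zero (h : IsDualPair g v m A) (j : Fin (d + 1)) :
    (facetMatrix (fun i => toQ (v i)) j).det ≠ 0 :=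
  det_facetMatrix_ne_zero_of_affineIndependent h.affineIndependent h.sum_index_div
    h.sum_index_div_smul (div_pos (Nat.cast_pos.2 h.index_pos) (h.cast_denom_pos j)).ne'

theorem toQ_dual_mem (h : IsDualPair g v m A) (i : Fin (d + 1)) :
    toQ (m i) ∈ (g : ℚ) • dualBody (simplexHull fun i => toQ (v i)) := by
  rw [smul_dualBody_simplexHull (Nat.cast_pos.2 h.index_pos)]
  intro k
  rw [h.toQ_dotProduct_eq]
  split_ifs <;> simp

theorem isLatticeSet_smul_dualBody (h : IsDualPair g v m A) :
    IsLatticeSet ((g : ℚ) • dualBody (simplexHull fun i => toQ (v i))) := by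
  have hg : (0 : ℚ) < g := Nat.cast_pos.2 h.index_pos
  refine Set.Subset.antisymm (fun x hx => ?_) (convexHull_min (fun x hx => hx.1) ?_)
  · rw [smul_dualBody_simplexHull hg] at hx
    -- The barycentric coordinates of `x` in the simplex with vertices `m i`.
    let c (i : Fin (d + 1)) : ℚ := (x ⬝ᵥ toQ (v i) + g) / A i
    have hc (i) : c i * A i = x ⬝ᵥ toQ (v i) + g := div_mul_cancel₀ _ (h.cast_denom_pos i).ne'
    have hsum : ∑ i, c i = 1 := by
      have hzero : ∑ i, g / A i * (x ⬝ᵥ toQ (v i)) = 0 := by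
        simp only [← smul_eq_mul, ← dotProduct_smul, ← dotProduct_sum, h.sum_index_div_smul,
          dotProduct_zero]
      simp only [div_mul_eq_mul_div, mul_div_assoc, ← mul_sum] at hzero
      simp only [c, add_div, sum_add_distrib, h.sum_index_div,
        (mul_eq_zero.1 hzero).resolve_left hg.ne', zero_add]
    have hx_eq : x = ∑ i, c i • toQ (m i) := by
      refine eq_of_dotProduct_facet_eq (h.det_facetMatrix_toQ_ne_zero 0) fun i => ?_
      simp only [sum_dotProduct, smul_dotProduct, h.toQ_dotProduct_eq, smul_eq_mul, mul_sub,
        mul_ite, mul_zero, sum_sub_distrib, sum_ite_eq', mem_univ, if_true, ← sum_mul, hsum, hc]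
      ring
    rw [hx_eq]
    refine (convex_convexHull ℚ _).sum_mem (fun i _ => div_nonneg ?_ (Nat.cast_nonneg _)) hsum
      fun i _ => subset_convexHull ℚ _ ⟨h.toQ_dual_mem i, fun j => ⟨m i j, rfl⟩⟩
    linarith [hx i]
  · rw [smul_dualBody_simplexHull hg, Set.ofPred_forall]
    exact convex_iInter fun i =>
      convex_halfSpace_ge ((dotProductBilin ℚ ℚ).flip (toQ (v i))).isLinear _

theorem dvd_of_isLatticeSet_smul_dualBody (h : IsDualPair g v m A) {i : Fin (d + 1)} {k : Fin d}
    (hik : m i k = 1) {c : ℕ} (hc : 0 < c)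
    (hlat : IsLatticeSet ((c : ℚ) • dualBody (simplexHull fun i => toQ (v i)))) : g ∣ c := by
  have hg : (g : ℚ) ≠ 0 := Nat.cast_ne_zero.2 h.index_pos.ne'
  have hdot (l) : ((c / g : ℚ) • toQ (m i)) ⬝ᵥ toQ (v l) =
      (if i = l then (c * A i / g : ℚ) else 0) - c := by
    rw [smul_dotProduct, h.toQ_dotProduct_eq, smul_eq_mul]
    split_ifs <;> field_simp
    ring
  obtain ⟨z, hz⟩ := hlat.exists_eq_toQ
    (mem_extremePoints_smul_dualBody (x := (c / g : ℚ) • toQ (m i)) (Nat.cast_pos.2 hc)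
      (h.det_facetMatrix_toQ_ne_zero i)
      (fun l => by rw [hdot, if_neg (Fin.succAbove_ne i l).symm, zero_sub])
      (by
        rw [hdot, if_pos rfl, neg_le_sub_iff_le_add]
        exact le_add_of_nonneg_left (by positivity)))
  have hzk : (c / g : ℚ) * m i k = z k := congrFun hz k
  rw [hik, Int.cast_one, mul_one, div_eq_iff hg] at hzk
  have hdvd : (g : ℤ) ∣ c := ⟨z k, by rw [mul_comm]; exact_mod_cast hzk⟩
  exact_mod_cast hdvd

theorem gorensteinIndex_eq (h : IsDualPair g v m A) {i : Fin (d + 1)} {k : Fin d}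
    (hik : m i k = 1) : gorensteinIndex (fun i => toQ (v i)) = g := by
  have hmem := And.intro h.index_pos h.isLatticeSet_smul_dualBody
  refine le_antisymm (Nat.sInf_le hmem) (le_csInf ⟨g, hmem⟩ fun c hc => ?_)
  exact Nat.le_of_dvd hc.1 (h.dvd_of_isLatticeSet_smul_dualBody hik hc.1 hc.2)

end IsDualPair

section SpecialSimplex

variable {g n : ℕ}

theorem isPrimitive_of_dotProduct_eq_one {d : ℕ} {x y : Fin d → ℤ} (h : y ⬝ᵥ x = 1) :
    IsPrimitive x := by
  have hdvd : univ.gcd x ∣ 1 :=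
    h ▸ dvd_sum fun j _ => dvd_mul_of_dvd_right (gcd_dvd (mem_univ j)) _
  rw [IsPrimitive, ← Finset.normalize_gcd]
  exact normalize_eq_one.2 (isUnit_of_dvd_one hdvd)

theorem PgenMult_congr {a b : ℕ → ℚ} (h : ∀ k, 1 ≤ k → k ≤ n + 1 → a k = b k) :
    PgenMult g (n + 2) a = PgenMult g (n + 2) b := by
  funext i j
  simp only [PgenMult, h (n + 2 - 1) (by lia) (by lia)]
  split_ifs <;> first | rfl | rw [h _ (by lia) (by lia)]

/-- The integral form of `aSpec g (n + 2)`. -/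
def specialShift (g n k : ℕ) : ℤ :=
  if k ≤ n then sylvProd g n - g * sylvProdErase g n (k - 1) else sylvProd g n

theorem aSpec_eq_specialShift (hg : 0 < g) {k : ℕ} (hk : 1 ≤ k) :
    aSpec g (n + 2) k = specialShift g n k := by
  simp only [aSpec, specialShift, Nat.add_sub_cancel, show n + 2 - 1 = n + 1 from rfl,
    tsylv_div hg]
  split_ifs with hkn
  · have := sylv_add_div_mul_sylvProd (g := g) (show k - 1 < n by lia) (-g)
    rw [Nat.sub_add_cancel hk] at this
    rw [sub_eq_add_neg, this]
    push_cast
    ring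
  · rfl

/-- The vertices of the simplex attaining the bound when `g` is odd. -/
def specialVertex (g n : ℕ) : Fin (n + 3) → Fin (n + 2) → ℤ :=
  extremalVertex g n (specialShift g n)

theorem specialVertex_eq_PgenMult (hg : 0 < g) (i : Fin (n + 3)) (j : Fin (n + 2)) :
    (specialVertex g n i j : ℚ) = PgenMult g (n + 2) (aSpec g (n + 2)) i j := by
  rw [PgenMult_congr fun k hk _ => aSpec_eq_specialShift hg hk, ← toQ_extremalVertex hg]
  rfl

/-- The sum of all coordinates of `x` but the last. -/
def initSum (x : Fin (n + 2) → ℤ) : ℤ := ∑ j : Fin (n + 1), x j.castSucc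

/-- The sum of the first `n` coordinates of `x`, weighted by `sylvProdErase g n`. -/
def weightedSum (g : ℕ) (x : Fin (n + 2) → ℤ) : ℤ :=
  ∑ j : Fin n, sylvProdErase g n j * x j.castSucc.castSucc

theorem specialVertex_of_lt (i : Fin n) :
    specialVertex g n i.castSucc.castSucc.castSucc = Pi.single i.castSucc.castSucc 1 := by
  funext j
  simp [specialVertex, extremalVertex, Pi.single_apply, Fin.ext_iff]

theorem sum_mul_specialVertex (g n : ℕ) (j : Fin (n + 2)) :
    3 * g * ∑ i : Fin n, sylvProdErase g n i * specialVertex g n i.castSucc.castSucc.castSucc j +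
      specialVertex g n (Fin.last n).castSucc.castSucc j +
      specialVertex g n (Fin.last (n + 1)).castSucc j + specialVertex g n (Fin.last (n + 2)) j =
        0 := by
  have hlt (i : Fin n) : n ≠ i ∧ n + 1 ≠ i := ⟨i.is_lt.ne', by lia⟩
  simp only [specialVertex_of_lt, Pi.single_apply, mul_ite, mul_one, mul_zero]
  induction j using Fin.lastCases with
  | last => simp [specialVertex, extremalVertex, Fin.ext_iff, hlt]
  | cast j =>
    induction j using Fin.lastCases with
    | last => simp [specialVertex, extremalVertex, specialShift, Fin.ext_iff, hlt]
    | cast j =>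
      simp only [specialVertex, extremalVertex, specialShift, Fin.castSucc_inj, sum_ite_eq,
        mem_univ, Fin.val_castSucc, Fin.val_last, Fin.is_lt]
      grind

theorem dotProduct_specialVertex_of_lt (x : Fin (n + 2) → ℤ) (i : Fin n) :
    x ⬝ᵥ specialVertex g n i.castSucc.castSucc.castSucc = x i.castSucc.castSucc := by
  rw [specialVertex_of_lt, dotProduct_single_one]

theorem dotProduct_specialVertex_mid (x : Fin (n + 2) → ℤ) :
    x ⬝ᵥ specialVertex g n (Fin.last n).castSucc.castSucc =
      sylvProd g n * initSum x - g * weightedSum g x := by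
  have hentry (j : Fin n) : x j.castSucc.castSucc *
      specialVertex g n (Fin.last n).castSucc.castSucc j.castSucc.castSucc =
        sylvProd g n * x j.castSucc.castSucc -
          g * (sylvProdErase g n j * x j.castSucc.castSucc) := by
    simp only [specialVertex, extremalVertex, Fin.val_castSucc, Fin.val_last, lt_irrefl, if_false,
      if_true, Fin.is_lt]
    ring
  have hmid : specialVertex g n (Fin.last n).castSucc.castSucc (Fin.last n).castSucc =
      sylvProd g n := by simp [specialVertex, extremalVertex]
  have hlast : specialVertex g n (Fin.last n).castSucc.castSucc (Fin.last (n + 1)) = 0 := by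
    simp [specialVertex, extremalVertex]
  simp only [dotProduct, initSum, weightedSum, Fin.sum_univ_castSucc, hentry, hmid, hlast,
    sum_sub_distrib, mul_add, mul_sum]
  ring

theorem dotProduct_specialVertex_penultimate (x : Fin (n + 2) → ℤ) :
    x ⬝ᵥ specialVertex g n (Fin.last (n + 1)).castSucc =
      x ⬝ᵥ specialVertex g n (Fin.last n).castSucc.castSucc +
        3 * (g * sylvProd g n) * x (Fin.last (n + 1)) := by
  have hvertex : specialVertex g n (Fin.last (n + 1)).castSucc =
      specialVertex g n (Fin.last n).castSucc.castSucc +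
        Pi.single (Fin.last (n + 1)) (3 * (g * sylvProd g n) : ℤ) := by
    funext j
    simp only [specialVertex, extremalVertex, specialShift, Pi.add_apply, Pi.single_apply,
      Fin.ext_iff, Fin.val_castSucc, Fin.val_last]
    grind
  rw [hvertex, dotProduct_add, dotProduct_single, mul_comm (x _)]

theorem dotProduct_specialVertex_last (x : Fin (n + 2) → ℤ) :
    x ⬝ᵥ specialVertex g n (Fin.last (n + 2)) =
      -(3 * g * weightedSum g x + x ⬝ᵥ specialVertex g n (Fin.last n).castSucc.castSucc +
        x ⬝ᵥ specialVertex g n (Fin.last (n + 1)).castSucc) := by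
  have hrel : (3 * g : ℤ) • ∑ i : Fin n,
      (sylvProdErase g n i : ℤ) • specialVertex g n i.castSucc.castSucc.castSucc +
      specialVertex g n (Fin.last n).castSucc.castSucc +
      specialVertex g n (Fin.last (n + 1)).castSucc + specialVertex g n (Fin.last (n + 2)) = 0 :=
    funext fun j => by simpa using sum_mul_specialVertex g n j
  have hdot := congrArg (x ⬝ᵥ ·) hrel
  simp only [dotProduct_add, dotProduct_smul, dotProduct_sum, dotProduct_specialVertex_of_lt,
    dotProduct_zero, smul_eq_mul] at hdot
  rw [weightedSum]
  linarith

/-- `g` times the vertices of the dual of the simplex with vertices `specialVertex g n`. -/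
def specialDual (g n : ℕ) (i : Fin (n + 3)) (j : Fin (n + 2)) : ℤ :=
  if j.val < n then (if j.val = i.val then (sylv g (j + 1) : ℤ) else 0) - g
  else if j.val = n then
    if i.val < n then g * n - sylv g (i + 1) else if i.val = n then g * (n + 2) else g * (n - 1)
  else if i.val = n then -1 else if i.val = n + 1 then 1 else 0

theorem initSum_specialDual (i : Fin (n + 3)) :
    initSum (specialDual g n i) =
      if i.val < n then 0 else if i.val = n then (2 * g : ℤ) else -g := by
  rw [initSum, Fin.sum_univ_castSucc]
  rcases lt_or_ge i.val n with hi | hi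
  · have : ∑ j : Fin n, (if j.val = i.val then (sylv g (j + 1) : ℤ) else 0) = sylv g (i + 1) := by
      rw [sum_eq_single ⟨i, hi⟩] <;> simp +contextual [Fin.ext_iff]
    simp only [specialDual, Fin.val_castSucc, Fin.val_last, Fin.is_lt, lt_irrefl, hi, if_true,
      if_false, sum_sub_distrib, this, sum_const, card_univ, Fintype.card_fin, nsmul_eq_mul]
    ring
  · have hne (j : Fin n) : j.val ≠ i.val := by lia
    simp only [specialDual, Fin.val_castSucc, Fin.val_last, Fin.is_lt, lt_irrefl, hi.not_gt, hne,
      if_true, if_false, sum_const, card_univ, Fintype.card_fin, nsmul_eq_mul]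
    split_ifs <;> ring

theorem mul_sum_fin_sylvProdErase_add_one (g n : ℕ) :
    g * ∑ j : Fin n, (sylvProdErase g n j : ℤ) + 1 = sylvProd g n := by
  rw [Fin.sum_univ_eq_sum_range fun j => (sylvProdErase g n j : ℤ)]
  exact_mod_cast mul_sum_sylvProdErase_add_one g n

theorem weightedSum_specialDual (i : Fin (n + 3)) :
    weightedSum g (specialDual g n i) = if i.val < n then 1 else (1 - sylvProd g n : ℤ) := by
  have hsum := mul_sum_fin_sylvProdErase_add_one g n
  have hsub : weightedSum g (specialDual g n i) =
      ∑ j : Fin n, (if j.val = i.val then (sylvProdErase g n j * sylv g (j + 1) : ℤ) else 0) -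
        g * ∑ j : Fin n, (sylvProdErase g n j : ℤ) := by
    simp [weightedSum, specialDual, mul_sub, mul_sum, sum_sub_distrib, mul_comm]
  rw [hsub]
  rcases lt_or_ge i.val n with hi | hi
  · rw [if_pos hi, sum_eq_single ⟨i, hi⟩ (by simp +contextual [Fin.ext_iff]) (by simp), if_pos rfl]
    have : (sylvProdErase g n i * sylv g (i + 1) : ℤ) = sylvProd g n := by
      exact_mod_cast sylvProdErase_mul_sylv hi
    linarith
  · have hne (j : Fin n) : j.val ≠ i.val := by lia
    simp only [hne, hi.not_gt, if_false, sum_const_zero]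
    linarith

theorem specialDual_dotProduct_specialVertex (i k : Fin (n + 3)) :
    specialDual g n i ⬝ᵥ specialVertex g n k =
      (if i = k then (extremalDenom g n i : ℤ) else 0) - g := by
  have hmid : specialDual g n i ⬝ᵥ specialVertex g n (Fin.last n).castSucc.castSucc =
      (if i.val = n then 3 * (g * sylvProd g n) else 0 : ℤ) - g := by
    rw [dotProduct_specialVertex_mid, initSum_specialDual, weightedSum_specialDual]
    split_ifs <;> lia
  have hpen : specialDual g n i ⬝ᵥ specialVertex g n (Fin.last (n + 1)).castSucc =
      (if i.val = n + 1 then 3 * (g * sylvProd g n) else 0 : ℤ) - g := by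
    rw [dotProduct_specialVertex_penultimate, hmid]
    simp only [specialDual, Fin.val_last]
    split_ifs <;> lia
  have hlast := dotProduct_specialVertex_last (g := g) (specialDual g n i)
  rw [hmid, hpen, weightedSum_specialDual] at hlast
  rcases eq_castSucc_or_last k with hk | rfl | rfl | rfl
  · obtain ⟨k, rfl⟩ : ∃ l : Fin n, k = l.castSucc.castSucc.castSucc := ⟨⟨k, hk⟩, rfl⟩
    rw [dotProduct_specialVertex_of_lt]
    simp only [specialDual, extremalDenom, tsylv_eq_mul_sylvProd, Fin.ext_iff, Fin.val_castSucc]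
    grind
  · rw [hmid]
    simp only [extremalDenom, tsylv_eq_mul_sylvProd, Fin.ext_iff, Fin.val_castSucc, Fin.val_last]
    grind
  · rw [hpen]
    simp only [extremalDenom, tsylv_eq_mul_sylvProd, Fin.ext_iff, Fin.val_castSucc, Fin.val_last]
    grind
  · rw [hlast]
    simp only [extremalDenom, tsylv_eq_mul_sylvProd, Fin.ext_iff, Fin.val_last]
    split_ifs <;> lia

theorem exists_initSum_eq (g : ℕ) (b c : ℤ) : ∃ x : Fin (n + 2) → ℤ,
    initSum x = b ∧ g * weightedSum g x + 1 = sylvProd g n ∧ x (Fin.last (n + 1)) = c := by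
  refine ⟨fun j => if j.val < n then 1 else if j.val = n then b - n else c, ?_, ?_, ?_⟩
  · simp [initSum, Fin.sum_univ_castSucc]
  · simpa [weightedSum] using mul_sum_fin_sylvProdErase_add_one g n
  · simp

theorem isPrimitive_specialVertex (hodd : Odd g) (i : Fin (n + 3)) :
    IsPrimitive (specialVertex g n i) := by
  rcases eq_castSucc_or_last i with hi | rfl | rfl | rfl
  · obtain ⟨k, rfl⟩ : ∃ k : Fin n, i = k.castSucc.castSucc.castSucc := ⟨⟨i, hi⟩, rfl⟩
    refine isPrimitive_of_dotProduct_eq_one (y := Pi.single k.castSucc.castSucc 1) ?_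
    rw [dotProduct_specialVertex_of_lt, Pi.single_eq_same]
  · obtain ⟨x, hinit, hweighted, -⟩ := exists_initSum_eq (n := n) g 1 0
    refine isPrimitive_of_dotProduct_eq_one (y := x) ?_
    rw [dotProduct_specialVertex_mid, hinit]
    linarith
  · obtain ⟨x, hinit, hweighted, hlast⟩ := exists_initSum_eq (n := n) g 1 0
    refine isPrimitive_of_dotProduct_eq_one (y := x) ?_
    rw [dotProduct_specialVertex_penultimate, dotProduct_specialVertex_mid, hinit, hlast]
    linarith
  · obtain ⟨r, rfl⟩ := hodd
    -- For `initSum x = b` and last coordinate `1` the value is `1 - sylvProd g n * (1 + 2b + 3g)`.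
    obtain ⟨x, hinit, hweighted, hlast⟩ := exists_initSum_eq (n := n) (2 * r + 1) (-(3 * r + 2)) 1
    refine isPrimitive_of_dotProduct_eq_one (y := x) ?_
    rw [dotProduct_specialVertex_last, dotProduct_specialVertex_penultimate,
      dotProduct_specialVertex_mid, hinit, hlast]
    push_cast at hweighted ⊢
    linarith

theorem sum_specialVertex_div_extremalDenom (hg : 0 < g) (j : Fin (n + 2)) :
    ∑ i, (specialVertex g n i j : ℚ) / extremalDenom g n i = 0 := by
  have hgq : (g : ℚ) ≠ 0 := Nat.cast_ne_zero.2 hg.ne'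
  have hprod : (sylvProd g n : ℚ) ≠ 0 := Nat.cast_ne_zero.2 (sylvProd_pos g n).ne'
  have hdiv (i : Fin n) : (specialVertex g n i.castSucc.castSucc.castSucc j : ℚ) / sylv g (i + 1) =
      sylvProdErase g n i * specialVertex g n i.castSucc.castSucc.castSucc j / sylvProd g n := by
    have : (sylv g (i + 1) : ℚ) ≠ 0 := Nat.cast_ne_zero.2 (sylv_pos g i).ne'
    rw [← sylvProdErase_mul_sylv i.is_lt] at hprod ⊢
    push_cast at hprod ⊢
    have := left_ne_zero_of_mul hprod
    field_simp
  have hrel := congrArg (Int.cast : ℤ → ℚ) (sum_mul_specialVertex g n j)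
  push_cast at hrel
  simp only [Fin.sum_univ_castSucc, extremalDenom, tsylv_eq_mul_sylvProd, Fin.val_castSucc,
    Fin.val_last, Fin.is_lt,
    if_true, hdiv, ← sum_div, lt_irrefl, if_false, show ¬n + 1 < n by lia, show ¬n + 2 < n by lia]
  push_cast
  field_simp
  linarith

theorem isDualPair_special (hodd : Odd g) :
    IsDualPair g (specialVertex g n) (specialDual g n) fun i => extremalDenom g n i where
  index_pos := hodd.pos
  denom_pos i := by
    have := tsylv_pos hodd.pos n
    rw [extremalDenom]
    split_ifs
    · exact sylv_pos g i
    · positivity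
  dotProduct_eq := specialDual_dotProduct_specialVertex
  balanced := sum_specialVertex_div_extremalDenom hodd.pos
  isPrimitive := isPrimitive_specialVertex hodd

theorem gorensteinIndex_specialVertex (hodd : Odd g) :
    gorensteinIndex (fun i => toQ (specialVertex g n i)) = g :=
  (isDualPair_special hodd).gorensteinIndex_eq (i := (Fin.last (n + 1)).castSucc)
    (k := Fin.last (n + 1)) (by simp [specialDual])

theorem multOf_specialVertex (hodd : Odd g) :
    multOf (specialVertex g n) = 3 * g * sylvProd g n ^ 2 := by
  have hlcm : lcmWeight (fun i : Fin (n + 3) => extremalDenom g n i) (Fin.last (n + 2)) = 1 :=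
    lcmWeight_last_eq_one hodd.pos (fun _ => extremalDenom_of_lt)
      fun _ => extremalDenom_of_le
  rw [← natAbs_det_facetMatrix_extremalVertex g n (specialShift g n), ← specialVertex,
    (isDualPair_special hodd).natAbs_det_facetMatrix_vertex, hlcm, one_mul]

end SpecialSimplex

section MultiplicityBound

variable {g n : ℕ} {v m : Fin (n + 3) → Fin (n + 2) → ℤ} {A : Fin (n + 3) → ℕ}

theorem three_le_tsylv (hg : 0 < g) (hn : n ≠ 0) (h₁₁ : ¬(n = 1 ∧ g = 1))
    (h₁₂ : ¬(n = 1 ∧ g = 2)) (h₂₁ : ¬(n = 2 ∧ g = 1)) : 3 ≤ tsylv g n := by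
  match n with
  | 1 =>
    rw [tsylv_one]
    lia
  | 2 =>
    have : 2 ≤ g := by lia
    rw [tsylv_add_two, sylv_eq_tsylv_add_one, tsylv_one]
    nlinarith
  | k + 3 =>
    have : 0 < tsylv g (k + 1) := tsylv_pos hg k
    have : 2 ≤ tsylv g (k + 2) := by
      rw [tsylv_add_two, sylv_eq_tsylv_add_one]
      nlinarith
    rw [tsylv_add_two, sylv_eq_tsylv_add_one]
    nlinarith

theorem three_mul_tsylv_sq_div (hg : 0 < g) :
    3 * (tsylv g (n + 1) : ℚ) ^ 2 / g = (3 * g * sylvProd g n ^ 2 : ℕ) := by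
  have : (g : ℚ) ≠ 0 := Nat.cast_ne_zero.2 hg.ne'
  rw [tsylv_eq_mul_sylvProd]
  push_cast
  field_simp

namespace IsDualPair

theorem mul_multOf_le_of_monotone (h : IsDualPair g v m A) (hA : Monotone A)
    (hT : n ≠ 0 → 3 ≤ tsylv g n) :
    g * multOf v ≤ 3 * tsylv g (n + 1) ^ 2 ∧
      (g * multOf v = 3 * tsylv g (n + 1) ^ 2 →
        (∀ i, A i = extremalDenom g n i) ∨ n = 1 ∧ g = 3 ∧ ∀ i, A i = 12) := by
  let B (i : ℕ) : ℕ := A ⟨min i (n + 2), by lia⟩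
  have hBA (i : Fin (n + 3)) : B i = A i := congrArg A (Fin.ext (min_eq_left (by lia)))
  have hsum : ∑ i ∈ range (n + 3), 1 / (B i : ℝ) = 1 / g := by
    rw [← Fin.sum_univ_eq_sum_range fun i => 1 / (B i : ℝ)]
    simp only [hBA]
    simpa using congrArg (Rat.cast : ℚ → ℝ) h.sum_one_div
  have hprod : multOf v ≤ ∏ i ∈ range (n + 1), B i := by
    rw [← Fin.prod_univ_eq_prod_range]
    exact h.multOf_le_prod.trans_eq
      (prod_congr rfl fun i _ => (hBA i.castSucc.castSucc).symm)
  obtain ⟨hle, heq⟩ := mul_prod_le_three_mul_tsylv_sq (A := B) h.index_pos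
    (fun i => h.denom_pos _) (fun i j hij => hA (Fin.mk_le_mk.2 (min_le_min_right _ hij))) hT hsum
  refine ⟨(Nat.mul_le_mul_left g hprod).trans hle, fun hmult => ?_⟩
  refine (heq (hle.antisymm (hmult ▸ Nat.mul_le_mul_left g hprod))).imp (fun hB i => ?_) ?_
  · rw [← hBA, hB i i.is_lt]
  · exact fun ⟨hn, hg, hB⟩ => ⟨hn, hg, fun i => by rw [← hBA, hB i i.is_lt]⟩

theorem multOf_le (h : IsDualPair g v m A) (hT : n ≠ 0 → 3 ≤ tsylv g n) :
    multOf v ≤ 3 * g * sylvProd g n ^ 2 := by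
  have hle :=
    ((h.comp_perm (Tuple.sort A)).mul_multOf_le_of_monotone (Tuple.monotone_sort A) hT).1
  rw [multOf_comp_perm, tsylv_eq_mul_sylvProd] at hle
  refine Nat.le_of_mul_le_mul_left (hle.trans_eq ?_) h.index_pos
  ring

theorem isIsomorphicToQ_of_multOf_eq (h : IsDualPair g v m A) (hT : n ≠ 0 → 3 ≤ tsylv g n)
    (hv : multOf v = 3 * g * sylvProd g n ^ 2) :
    n = 1 ∧ g = 3 ∧ IsIsomorphicToQ v (Pexc33 (n + 2)) ∨
      ∃ a : ℕ → ℤ, (∀ k, 1 ≤ k → k ≤ n + 1 → 1 ≤ a k) ∧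
        IsIsomorphicToQ v (PgenMult g (n + 2) fun k => a k) := by
  set σ := Tuple.sort A
  have hσ := h.comp_perm σ
  rw [← multOf_comp_perm v σ] at hv
  have hmul : g * multOf (v ∘ σ) = 3 * tsylv g (n + 1) ^ 2 := by
    rw [hv, tsylv_eq_mul_sylvProd]
    ring
  rcases (hσ.mul_multOf_le_of_monotone (Tuple.monotone_sort A) hT).2 hmul with hA | ⟨rfl, rfl, hA⟩
  · obtain ⟨a, ha, hiso⟩ := hσ.exists_isIsomorphicToQ_PgenMult
      (fun i hi => (hA i).trans (extremalDenom_of_lt hi))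
      (fun i hi => (hA i).trans (extremalDenom_of_le hi)) hv
    exact Or.inr ⟨a, ha, hiso.of_comp_perm⟩
  · rw [funext hA] at hσ
    exact Or.inl ⟨rfl, rfl, (hσ.isIsomorphicToQ_Pexc33 (hv.trans (by decide))).of_comp_perm⟩

end IsDualPair

end MultiplicityBound

/-- For a Fano simplex of dimension `d` and Gorenstein index `g`,
with `(d,g)` not among `(3,1)`, `(3,2)`, `(4,1)`, one has
`mult(Δ) ≤ 3 t_{g,d-1}² / g`; if equality holds then `Δ` is isomorphic to one of the
listed extremal matrices; moreover, for odd `g` the special choice of the `a_k`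
yields a Fano simplex of dimension `d` and Gorenstein index `g` attaining the bound. -/
theorem mult_bound_general
    (d g : ℕ) (hd : 2 ≤ d) (hg : 1 ≤ g)
    (h31 : ¬(d = 3 ∧ g = 1)) (h32 : ¬(d = 3 ∧ g = 2)) (h41 : ¬(d = 4 ∧ g = 1))
    (v : Fin (d + 1) → Fin d → ℤ)
    (hFano : IsFanoSimplex v)
    (hGor : gorensteinIndex (fun i => toQ (v i)) = g) :
    ((multOf v : ℚ) ≤ 3 * (tsylv g (d - 1) : ℚ) ^ 2 / (g : ℚ)) ∧
      ((multOf v : ℚ) = 3 * (tsylv g (d - 1) : ℚ) ^ 2 / (g : ℚ) →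
        (d = 3 ∧ g = 3 ∧ IsIsomorphicToQ v (Pexc33 d)) ∨
          ∃ a : ℕ → ℤ, (∀ k, 1 ≤ k → k ≤ d - 1 → 1 ≤ a k) ∧
            IsIsomorphicToQ v (PgenMult g d fun k => (a k : ℚ))) ∧
      (Odd g →
        ∃ w : Fin (d + 1) → Fin d → ℤ,
          (∀ i j, (w i j : ℚ) = PgenMult g d (aSpec g d) i j) ∧
          IsFanoSimplex w ∧
          gorensteinIndex (fun i => toQ (w i)) = g ∧
          (multOf w : ℚ) = 3 * (tsylv g (d - 1) : ℚ) ^ 2 / (g : ℚ)) := by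
  obtain ⟨n, rfl⟩ := Nat.exists_eq_add_of_le' hd
  obtain ⟨m, A, h⟩ := hFano.exists_isDualPair (by lia)
  rw [hGor] at h
  have hT (hn : n ≠ 0) : 3 ≤ tsylv g n := three_le_tsylv hg hn (by lia) (by lia) (by lia)
  rw [show n + 2 - 1 = n + 1 from rfl, three_mul_tsylv_sq_div hg]
  refine ⟨Nat.cast_le.2 (h.multOf_le hT), fun hv => ?_, fun hodd => ?_⟩
  · exact (h.isIsomorphicToQ_of_multOf_eq hT (Nat.cast_inj.1 hv)).imp_left
      fun ⟨hn, hg3, hiso⟩ => ⟨congrArg (· + 2) hn, hg3, hiso⟩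
  · exact ⟨specialVertex g n, specialVertex_eq_PgenMult hg, (isDualPair_special hodd).isFanoSimplex,
      gorensteinIndex_specialVertex hodd, congrArg _ (multOf_specialVertex hodd)⟩
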